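/- arXiv:1108.1878 — 3 statements merged into one kernel-verified Lean document; each statement's English description precedes it below -/
import Mathlib

section
/- Let −|a| < α < β < |a| with 0 ∈ [α, β], and let δ satisfy 1/6 < δ < 1/2. For each positive integer n, let y₀ < y₁ < ... < y_{s_n} enumerate the integers y with y + n even and nα ≤ y ≤ nβ. Then there exists a constant C > 0 such that |Σ_{j=0}^{k} e^{i n θ(y_j/n)}| ≤ C n^{1/2 + δ} for all n and all k with 0 ≤ k ≤ s_n. -/
/-!
The sums are in fact `O(√n)`, by a first-derivative (Kuzmin–Landau) argument.

Since `μ'(t(η)) = η`, one has `θ' = -2 t` (`hasDerivAt_thetaF`), and `t` is increasing, odd, with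
`|t(η)| ≥ |b| |η|` and `|t| < π / 2` on `(-|a|, |a|)`. Consecutive points differ by `2 / n`, so by
the mean value theorem the phase increments are `-4 t(ξ)`: they decrease, stay away from `±2π` on
the compact interval `[α, β]`, and come close to `2πℤ` only near `η = 0`.

The points with `|y| < ⌈√n⌉` are counted trivially. On each of the two remaining sides the
increments keep distance at least `κ / √n` from `2πℤ`, and the Kuzmin–Landau inequality
(`kuzmin_landau`, through `block_bound`) bounds the corresponding sum by a multiple of `√n`.
-/

open Filter Topology Asymptotics MeasureTheory

noncomputable section

/-- One step of the (column-decomposition) quantum walk `U` on functions `ℤ → ℂ²`: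
`(Uf)(x) = P f(x+1) + Q f(x-1)` with `P = [[a,0],[-conj b,0]]`, `Q = [[0,b],[0,conj a]]`. -/
def qwStep (a b : ℂ) (f : ℤ → ℂ × ℂ) : ℤ → ℂ × ℂ := fun x =>
  (a * (f (x + 1)).1 + b * (f (x - 1)).2,
   -(starRingEnd ℂ) b * (f (x + 1)).1 + (starRingEnd ℂ) a * (f (x - 1)).2)

/-- `δ₀ ⊗ φ : ℤ → ℂ²`. -/
def qwDelta (φ : ℂ × ℂ) : ℤ → ℂ × ℂ := fun x => if x = 0 then φ else 0

/-- Squared norm of a vector in `ℂ²`. -/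
def nsq (u : ℂ × ℂ) : ℝ := ‖u.1‖ ^ 2 + ‖u.2‖ ^ 2

/-- Transition probability `p_n(φ; y) = ‖(Uⁿ(δ₀ ⊗ φ))(y)‖²`. -/
def qwP (a b : ℂ) (φ : ℂ × ℂ) (n : ℕ) (y : ℤ) : ℝ :=
  nsq (((qwStep a b)^[n] (qwDelta φ)) y)

/-- `λ_A(φ) = |φ₂|² − |φ₁|² + (1/|a|²)(ab conj(φ₁)φ₂ + conj(ab) φ₁ conj(φ₂))` (a real number). -/
def lamA (a b : ℂ) (φ : ℂ × ℂ) : ℝ :=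
  ‖φ.2‖ ^ 2 - ‖φ.1‖ ^ 2 +
    (a * b * (starRingEnd ℂ) φ.1 * φ.2 +
      (starRingEnd ℂ) a * (starRingEnd ℂ) b * φ.1 * (starRingEnd ℂ) φ.2).re / ‖a‖ ^ 2

/-- `μ(t) = arccos(|a| cos t)`. -/
def muF (a : ℂ) (t : ℝ) : ℝ := Real.arccos (‖a‖ * Real.cos t)

/-- `t(η) = arcsin(|b|η/(|a|√(1 − η²)))`. -/
def tF (a b : ℂ) (η : ℝ) : ℝ := Real.arcsin (‖b‖ * η / (‖a‖ * Real.sqrt (1 - η ^ 2)))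

/-- `θ(η) = 2μ(t(η)) − 2η t(η)`. -/
def thetaF (a b : ℂ) (η : ℝ) : ℝ := 2 * muF a (tF a b η) - 2 * η * tF a b η

/-- The set of integers `y` with `y + n` even and `nα ≤ y ≤ nβ`
(for `n ≥ 1`, `nα ≤ y ↔ ⌈nα⌉ ≤ y` and `y ≤ nβ ↔ y ≤ ⌊nβ⌋`). These are exactly the points
`y₀ < y₁ < ⋯ < y_{s_n}` of the paper; a partial sum `∑_{j=0}^{k}` over the enumeration is the
same as a sum over the elements `≤ m` for a cutoff `m = y_k`. -/
def Tset (α β : ℝ) (n : ℕ) : Finset ℤ :=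
  (Finset.Icc ⌈(n : ℝ) * α⌉ ⌊(n : ℝ) * β⌋).filter fun y => Even ((n : ℤ) + y)

/-! ### The Kuzmin–Landau inequality -/

/-- The imaginary part of `-2 / (exp (i D) - 1)`, i.e. `cot (D / 2)`. -/
def halfCot (D : ℝ) : ℝ := Real.cos (D / 2) / Real.sin (D / 2)

/-- The weight `1 / (exp (i D) - 1) = -1/2 - (i/2) cot (D / 2)`. -/
def klWeight (D : ℝ) : ℂ := -(1 / 2) - Complex.I / 2 * (halfCot D : ℂ)

lemma klWeight_mul {D : ℝ} (h : Real.sin (D / 2) ≠ 0) :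
    klWeight D * (Complex.exp (Complex.I * D) - 1) = 1 := by
  have hs : ((Real.sin (D / 2) : ℝ) : ℂ) ≠ 0 := by exact_mod_cast h
  have h1 : Complex.exp (Complex.I * D) =
      ((Real.cos (D / 2) : ℝ) + (Real.sin (D / 2) : ℝ) * Complex.I) ^ 2 := by
    rw [Complex.ofReal_cos, Complex.ofReal_sin, ← Complex.exp_mul_I, ← Complex.exp_nat_mul]
    congr 1
    push_cast
    ring
  have h2 : ((Real.sin (D / 2) : ℝ) : ℂ) ^ 2 + ((Real.cos (D / 2) : ℝ) : ℂ) ^ 2 = 1 := by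
    exact_mod_cast Real.sin_sq_add_cos_sq (D / 2)
  rw [h1, klWeight, halfCot]
  rw [Complex.ofReal_div]
  generalize ((Real.sin (D / 2) : ℝ) : ℂ) = s at *
  generalize ((Real.cos (D / 2) : ℝ) : ℂ) = c at *
  have hI := Complex.I_sq
  field_simp
  grind

lemma sin_half_lower {D l : ℝ} (hl : 0 < l) (h1 : l ≤ D) (h2 : D ≤ 2 * Real.pi - l) :
    l / Real.pi ≤ Real.sin (D / 2) := by
  have hpi := Real.pi_pos
  rcases le_total (D / 2) (Real.pi / 2) with h | h
  · refine le_trans ?_ (Real.mul_le_sin (by linarith) h)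
    rw [div_mul_div_comm, div_le_div_iff₀ hpi (by positivity)]
    nlinarith
  · rw [← Real.sin_pi_sub]
    refine le_trans ?_ (Real.mul_le_sin (by linarith) (by linarith))
    rw [div_mul_eq_mul_div, div_le_div_iff_of_pos_right hpi]
    linarith

lemma abs_halfCot_le {D l : ℝ} (hl : 0 < l) (h1 : l ≤ D) (h2 : D ≤ 2 * Real.pi - l) :
    |halfCot D| ≤ Real.pi / l := by
  have hpi := Real.pi_pos
  have hs := sin_half_lower hl h1 h2
  have h3 : 0 < l / Real.pi := by positivity
  have hc := Real.abs_cos_le_one (D / 2)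
  rw [halfCot, abs_div, abs_of_pos (h3.trans_le hs)]
  calc _ ≤ 1 / (l / Real.pi) := by gcongr
    _ = _ := by field_simp

lemma halfCot_anti {D E : ℝ} (h0 : 0 < D) (h : D ≤ E) (h1 : E < 2 * Real.pi) :
    halfCot E ≤ halfCot D := by
  have hD : 0 < Real.sin (D / 2) := Real.sin_pos_of_pos_of_lt_pi (by linarith) (by linarith)
  have hE : 0 < Real.sin (E / 2) := Real.sin_pos_of_pos_of_lt_pi (by linarith) (by linarith)
  have h2 : 0 ≤ Real.sin (E / 2 - D / 2) :=
    Real.sin_nonneg_of_nonneg_of_le_pi (by linarith) (by linarith)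
  rw [Real.sin_sub] at h2
  rw [halfCot, halfCot, div_le_div_iff₀ hE hD]
  linarith

lemma norm_klWeight_le (D : ℝ) : ‖klWeight D‖ ≤ 1 / 2 + |halfCot D| / 2 := by
  refine (norm_sub_le _ _).trans (le_of_eq ?_)
  simp [div_eq_mul_inv, mul_comm]

lemma norm_klWeight_sub {D E : ℝ} (h : halfCot E ≤ halfCot D) :
    ‖klWeight D - klWeight E‖ = (halfCot D - halfCot E) / 2 := by
  have : klWeight D - klWeight E = -(Complex.I / 2) * ((halfCot D - halfCot E : ℝ) : ℂ) := by
    simp only [klWeight]; push_cast; ring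
  rw [this, norm_mul, Complex.norm_real, Real.norm_of_nonneg (by linarith)]
  simp
  ring

/-- Kuzmin–Landau inequality for sequences in the unit disc with decreasing phase increments `D j`
that stay at distance at least `l` from `2πℤ`. The proof is partial summation:
`e j = klWeight (D j) * (e (j + 1) - e j)`, and the weights have monotone imaginary part, hence
total variation `O(1 / l)`. -/
lemma kuzmin_landau (e : ℕ → ℂ) (D : ℕ → ℝ) (N : ℕ) (l : ℝ) (hl : 0 < l)
    (he : ∀ j ≤ N, ‖e j‖ ≤ 1)
    (hstep : ∀ j < N, e (j + 1) = Complex.exp (Complex.I * D j) * e j)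
    (hanti : ∀ j, j + 1 < N → D (j + 1) ≤ D j)
    (hlow : ∀ j < N, l ≤ D j) (hup : ∀ j < N, D j ≤ 2 * Real.pi - l) :
    ‖∑ j ∈ Finset.range (N + 1), e j‖ ≤ 2 + 2 * Real.pi / l := by
  have hpi := Real.pi_pos
  rcases N with _ | N
  · simpa using (he 0 le_rfl).trans (by have : 0 < 2 * Real.pi / l := by positivity
                                        linarith)
  have hg : ∀ j < N + 1, e j = klWeight (D j) * (e (j + 1) - e j) := by
    intro j hj
    have hs : Real.sin (D j / 2) ≠ 0 := by
      have := sin_half_lower hl (hlow j hj) (hup j hj)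
      have h3 : 0 < l / Real.pi := by positivity
      linarith
    rw [hstep j hj]
    linear_combination -e j * klWeight_mul hs
  -- The boundary term `klWeight (D k) * e (k + 1)` of the partial summation is kept separate.
  have key : ∀ k < N + 1, ‖∑ j ∈ Finset.range (k + 1), e j - klWeight (D k) * e (k + 1)‖ ≤
      1 / 2 + |halfCot (D 0)| / 2 + (halfCot (D k) - halfCot (D 0)) / 2 := by
    intro k
    induction k with
    | zero =>
      intro hk
      have h1 : ∑ j ∈ Finset.range (0 + 1), e j - klWeight (D 0) * e (0 + 1) =
          -(klWeight (D 0) * e 0) := by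
        rw [zero_add, Finset.sum_range_one]
        linear_combination hg 0 hk
      rw [h1, norm_neg, norm_mul]
      have h2 := norm_klWeight_le (D 0)
      have h3 := he 0 (by omega)
      have := mul_le_mul h2 h3 (norm_nonneg _) ((norm_nonneg _).trans h2)
      linarith
    | succ k ih =>
      intro hk
      have h1 : ∑ j ∈ Finset.range (k + 1 + 1), e j - klWeight (D (k + 1)) * e (k + 1 + 1) =
          (∑ j ∈ Finset.range (k + 1), e j - klWeight (D k) * e (k + 1)) +
            (klWeight (D k) - klWeight (D (k + 1))) * e (k + 1) := by
        rw [Finset.sum_range_succ _ (k + 1)]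
        linear_combination hg (k + 1) hk
      have h4 : ‖(klWeight (D k) - klWeight (D (k + 1))) * e (k + 1)‖ ≤
          (halfCot (D (k + 1)) - halfCot (D k)) / 2 := by
        rw [norm_mul, norm_sub_rev, norm_klWeight_sub (halfCot_anti
          (hl.trans_le (hlow _ hk)) (hanti k hk) (by linarith [hup k (by omega)]))]
        exact mul_le_of_le_one_right (by
          have := halfCot_anti (hl.trans_le (hlow _ hk)) (hanti k hk)
            (by linarith [hup k (by omega)])
          linarith) (he _ (by omega))
      rw [h1]
      refine (norm_add_le _ _).trans ?_
      have := ih (by omega)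
      linarith
  have hN := key N (by omega)
  have hc0 := abs_halfCot_le hl (hlow 0 (by omega)) (hup 0 (by omega))
  have hcN := abs_halfCot_le hl (hlow N (by omega)) (hup N (by omega))
  have hgN := norm_klWeight_le (D N)
  have hl1 : ‖klWeight (D N) * e (N + 1)‖ ≤ 1 / 2 + |halfCot (D N)| / 2 := by
    rw [norm_mul]
    exact (mul_le_of_le_one_right (norm_nonneg _) (he _ le_rfl)).trans hgN
  have hl2 := he (N + 1) le_rfl
  have h5 : ∑ j ∈ Finset.range (N + 1 + 1), e j =
      (∑ j ∈ Finset.range (N + 1), e j - klWeight (D N) * e (N + 1)) +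
        klWeight (D N) * e (N + 1) + e (N + 1) := by
    rw [Finset.sum_range_succ _ (N + 1)]
    ring
  rw [h5]
  refine (norm_add₃_le).trans ?_
  have h6 := abs_le.1 hc0
  have h7 := abs_le.1 hcN
  have h8 : 2 * Real.pi / l = 2 * (Real.pi / l) := by ring
  rw [h8]
  linarith

/-! ### The phase functions -/

lemma tF_arg_sq {r s η : ℝ} (hr : 0 < r) (hrs : r ^ 2 + s ^ 2 = 1)
    (hη : η ^ 2 < r ^ 2) :
    1 - (s * η / (r * Real.sqrt (1 - η ^ 2))) ^ 2 = (r ^ 2 - η ^ 2) / (r ^ 2 * (1 - η ^ 2)) := by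
  have h1 : 0 < 1 - η ^ 2 := by nlinarith
  rw [div_pow, mul_pow, mul_pow, Real.sq_sqrt h1.le, eq_div_iff (by positivity),
    sub_mul, div_mul_cancel₀ _ (by positivity)]
  nlinarith

lemma tF_arg_abs_lt {r s η : ℝ} (hr : 0 < r) (hrs : r ^ 2 + s ^ 2 = 1)
    (hη : η ^ 2 < r ^ 2) :
    |s * η / (r * Real.sqrt (1 - η ^ 2))| < 1 := by
  have h1 : 0 < 1 - η ^ 2 := by nlinarith
  have h2 := tF_arg_sq hr hrs hη
  have h3 : 0 < (r ^ 2 - η ^ 2) / (r ^ 2 * (1 - η ^ 2)) := div_pos (by linarith) (by positivity)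
  rw [← sq_lt_one_iff_abs_lt_one]
  linarith

/-- The stationary-phase identity `θ' = -2 t`: since `μ'(t(η)) = η`, the terms containing `t'`
cancel. -/
lemma hasDerivAt_thetaF {a b : ℂ} (ha : 0 < ‖a‖) (hb : 0 < ‖b‖) (hab1 : ‖a‖ ^ 2 + ‖b‖ ^ 2 = 1)
    {η : ℝ} (hη : η ^ 2 < ‖a‖ ^ 2) : HasDerivAt (thetaF a b) (-2 * tF a b η) η := by
  have h1 : 0 < 1 - η ^ 2 := by nlinarith
  have hq : 0 < Real.sqrt (1 - η ^ 2) := Real.sqrt_pos.2 h1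
  have hx := abs_lt.1 (tF_arg_abs_lt ha hab1 hη)
  have ht : DifferentiableAt ℝ (tF a b) η := by
    unfold tF
    refine DifferentiableAt.fun_comp' (g := Real.arcsin) η
      (Real.differentiableAt_arcsin.2 ⟨hx.1.ne', hx.2.ne⟩) ?_
    refine DifferentiableAt.div (by fun_prop) ?_ (by positivity)
    have hd : DifferentiableAt ℝ (fun η : ℝ => 1 - η ^ 2) η := by fun_prop
    exact (hd.sqrt h1.ne').const_mul _
  have hsin : Real.sin (tF a b η) = ‖b‖ * η / (‖a‖ * Real.sqrt (1 - η ^ 2)) :=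
    Real.sin_arcsin hx.1.le hx.2.le
  have hcos : (‖a‖ * Real.cos (tF a b η)) ^ 2 = (‖a‖ ^ 2 - η ^ 2) / (1 - η ^ 2) := by
    rw [mul_pow, Real.cos_sq', hsin, tF_arg_sq ha hab1 hη]
    field_simp
  have hone : 1 - (‖a‖ * Real.cos (tF a b η)) ^ 2 = ‖b‖ ^ 2 / (1 - η ^ 2) := by
    rw [hcos, eq_div_iff h1.ne', sub_mul, div_mul_cancel₀ _ h1.ne']
    linarith
  have hlt : |‖a‖ * Real.cos (tF a b η)| < 1 := by
    rw [← sq_lt_one_iff_abs_lt_one]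
    have : 0 < ‖b‖ ^ 2 / (1 - η ^ 2) := by positivity
    linarith
  have hlt' := abs_lt.1 hlt
  have hmu : HasDerivAt (muF a) η (tF a b η) := by
    have h := (Real.hasDerivAt_arccos hlt'.1.ne' hlt'.2.ne).comp (tF a b η)
      ((Real.hasDerivAt_cos (tF a b η)).const_mul ‖a‖)
    refine h.congr_deriv ?_
    rw [hone, Real.sqrt_div (by positivity), Real.sqrt_sq hb.le, hsin]
    field_simp
  have := ((hmu.comp η ht.hasDerivAt).const_mul 2).sub
    (((hasDerivAt_id η).const_mul 2).mul ht.hasDerivAt)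
  refine this.congr_deriv ?_
  simp
  ring

lemma tF_mono {a b : ℂ} (ha : 0 < ‖a‖) (hb : 0 < ‖b‖) (hab1 : ‖a‖ ^ 2 + ‖b‖ ^ 2 = 1)
    {x y : ℝ} (hx : x ^ 2 < ‖a‖ ^ 2) (hy : y ^ 2 < ‖a‖ ^ 2) (hxy : x ≤ y) :
    tF a b x ≤ tF a b y := by
  have h1 : 0 < 1 - x ^ 2 := by nlinarith
  have h2 : 0 < 1 - y ^ 2 := by nlinarith
  have hq := Real.sqrt_pos.2 h1
  have hp := Real.sqrt_pos.2 h2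
  apply Real.monotone_arcsin
  rw [div_le_div_iff₀ (by positivity) (by positivity)]
  have key : x * Real.sqrt (1 - y ^ 2) ≤ y * Real.sqrt (1 - x ^ 2) := by
    rcases le_total 0 x with h0 | h0
    · gcongr
      linarith
    · rcases le_total 0 y with h3 | h3
      · exact (mul_nonpos_of_nonpos_of_nonneg h0 hp.le).trans (by positivity)
      · have h4 : Real.sqrt (1 - x ^ 2) ≤ Real.sqrt (1 - y ^ 2) :=
          Real.sqrt_le_sqrt (by nlinarith)
        nlinarith
  calc _ = ‖b‖ * ‖a‖ * (x * Real.sqrt (1 - y ^ 2)) := by ring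
    _ ≤ ‖b‖ * ‖a‖ * (y * Real.sqrt (1 - x ^ 2)) := by gcongr
    _ = _ := by ring

lemma tF_neg (a b : ℂ) (x : ℝ) : tF a b (-x) = -tF a b x := by
  rw [tF, tF, ← Real.arcsin_neg, neg_sq]
  congr 1
  ring

lemma tF_lower {a b : ℂ} (ha : 0 < ‖a‖) (hb : 0 < ‖b‖) (hab1 : ‖a‖ ^ 2 + ‖b‖ ^ 2 = 1)
    {x : ℝ} (hx : x ^ 2 < ‖a‖ ^ 2) (h0 : 0 ≤ x) : ‖b‖ * x ≤ tF a b x := by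
  have h1 : 0 < 1 - x ^ 2 := by nlinarith
  have hq := Real.sqrt_pos.2 h1
  have hx' := abs_lt.1 (tF_arg_abs_lt ha hab1 hx)
  have h2 : 0 ≤ ‖b‖ * x / (‖a‖ * Real.sqrt (1 - x ^ 2)) := by positivity
  have h3 : ‖b‖ * x ≤ ‖b‖ * x / (‖a‖ * Real.sqrt (1 - x ^ 2)) := by
    rw [le_div_iff₀ (by positivity)]
    have : ‖a‖ ≤ 1 := by nlinarith
    have h5 : Real.sqrt (1 - x ^ 2) ≤ 1 := Real.sqrt_le_one.2 (by nlinarith)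
    exact mul_le_of_le_one_right (by positivity) (mul_le_one₀ this hq.le h5)
  have h4 := Real.sin_le (Real.arcsin_nonneg.2 h2)
  rw [Real.sin_arcsin hx'.1.le hx'.2.le] at h4
  exact h3.trans h4

lemma tF_lt_pi_div_two {a b : ℂ} (ha : 0 < ‖a‖) (hab1 : ‖a‖ ^ 2 + ‖b‖ ^ 2 = 1)
    {x : ℝ} (hx : x ^ 2 < ‖a‖ ^ 2) : tF a b x < Real.pi / 2 :=
  Real.arcsin_lt_pi_div_two.2 (abs_lt.1 (tF_arg_abs_lt ha hab1 hx)).2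

/-! ### Sums over points of fixed parity -/

/-- The integers of a given parity in an interval form an arithmetic progression of step two. -/
lemma sum_parity_Icc (n p q : ℤ) :
    ∃ (p' : ℤ) (N : ℕ), p ≤ p' ∧ (∀ j < N, p' + 2 * (j : ℤ) ≤ q) ∧
      ∀ g : ℤ → ℂ, ∑ y ∈ (Finset.Icc p q).filter (fun y => Even (n + y)), g y =
        ∑ j ∈ Finset.range N, g (p' + 2 * (j : ℤ)) := by
  obtain ⟨p', hp, hp1, he⟩ : ∃ p', p ≤ p' ∧ p' ≤ p + 1 ∧ (n + p') % 2 = 0 := by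
    rcases Int.emod_two_eq_zero_or_one (n + p) with h | h
    · exact ⟨p, le_rfl, by omega, h⟩
    · exact ⟨p + 1, by omega, le_rfl, by omega⟩
  refine ⟨p', ((q - p') / 2 + 1).toNat, hp, fun j hj => by omega, fun g => ?_⟩
  have himg : (Finset.Icc p q).filter (fun y => Even (n + y)) =
      (Finset.range ((q - p') / 2 + 1).toNat).image (fun j : ℕ => p' + 2 * (j : ℤ)) := by
    ext y
    simp only [Finset.mem_filter, Finset.mem_Icc, Finset.mem_image, Finset.mem_range,
      Int.even_iff]
    constructor
    · rintro ⟨⟨h1, h2⟩, h3⟩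
      exact ⟨((y - p') / 2).toNat, by omega, by omega⟩
    · rintro ⟨j, hj, rfl⟩
      omega
  rw [himg, Finset.sum_image]
  intro i _ j _ hij
  simpa using hij

/-- Bound for the sum over the points `y` of the right parity with `y / n ∈ [u, v]`. By the mean
value theorem the phase increments are `-4 t(ξ)` with `ξ` between consecutive points, so they
decrease; after a shift by `2πσ` they lie in `[l, 2π - l]` and `kuzmin_landau` applies. -/
lemma block_bound {a b : ℂ} (ha : 0 < ‖a‖) (hb : 0 < ‖b‖) (hab1 : ‖a‖ ^ 2 + ‖b‖ ^ 2 = 1)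
    (n : ℕ) (hn : 0 < n) (σ : ℤ) (l u v : ℝ) (hl : 0 < l)
    (hu : u ^ 2 < ‖a‖ ^ 2) (hv : v ^ 2 < ‖a‖ ^ 2)
    (hlow : l ≤ 2 * Real.pi * σ - 4 * tF a b v)
    (hup : 2 * Real.pi * σ - 4 * tF a b u ≤ 2 * Real.pi - l)
    (p q : ℤ) (hp : (n : ℝ) * u ≤ p) (hq : (q : ℝ) ≤ n * v) :
    ‖∑ y ∈ (Finset.Icc p q).filter (fun y => Even ((n : ℤ) + y)),
      Complex.exp (Complex.I * (n : ℂ) * ((thetaF a b ((y : ℝ) / (n : ℝ)) : ℝ) : ℂ))‖ ≤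
      2 + 2 * Real.pi / l := by
  have hn' : (0 : ℝ) < n := by exact_mod_cast hn
  obtain ⟨p', N, hpp, hN, hsum⟩ := sum_parity_Icc n p q
  rw [hsum]
  rcases N with _ | N
  · have := Real.pi_pos
    simp
    positivity
  set x : ℕ → ℝ := fun j => ((p' + 2 * (j : ℤ) : ℤ) : ℝ) / n with hx
  have hxstep : ∀ j, x (j + 1) - x j = 2 / n := by
    intro j; simp only [hx]; push_cast; ring
  have hxlow : ∀ j, u ≤ x j := by
    intro j
    simp only [hx]
    rw [le_div_iff₀ hn']
    have : (p : ℝ) ≤ ((p' + 2 * (j : ℤ) : ℤ) : ℝ) := by exact_mod_cast (by omega)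
    linarith
  have hxup : ∀ j < N + 1, x j ≤ v := by
    intro j hj
    simp only [hx]
    rw [div_le_iff₀ hn']
    have : ((p' + 2 * (j : ℤ) : ℤ) : ℝ) ≤ q := by exact_mod_cast hN j hj
    linarith
  have hin : ∀ z, u ≤ z → z ≤ v → z ^ 2 < ‖a‖ ^ 2 := by
    intro z h1 h2
    rw [sq_lt_sq, abs_of_pos ha, abs_lt] at *
    exact ⟨by linarith [hu.1], by linarith [hv.2]⟩
  have hmvt : ∀ j : ℕ, ∃ ξ : ℝ, j < N → x j < ξ ∧ ξ < x (j + 1) ∧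
      n * (thetaF a b (x (j + 1)) - thetaF a b (x j)) = -4 * tF a b ξ := by
    intro j
    by_cases hj : j < N
    swap
    · exact ⟨0, fun h => absurd h hj⟩
    have h2n : 0 < (2 : ℝ) / n := by positivity
    have hd : ∀ z ∈ Set.Icc (x j) (x (j + 1)), HasDerivAt (thetaF a b) (-2 * tF a b z) z :=
      fun z hz => hasDerivAt_thetaF ha hb hab1
        (hin z ((hxlow j).trans hz.1) (hz.2.trans (hxup _ (by omega))))
    obtain ⟨ξ, hξ, h⟩ := exists_hasDerivAt_eq_slope (thetaF a b) (fun z => -2 * tF a b z)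
      (show x j < x (j + 1) by linarith [hxstep j])
      (fun z hz => (hd z hz).continuousAt.continuousWithinAt)
      (fun z hz => hd z ⟨hz.1.le, hz.2.le⟩)
    refine ⟨ξ, fun _ => ⟨hξ.1, hξ.2, ?_⟩⟩
    rw [hxstep, eq_div_iff h2n.ne'] at h
    rw [← h]
    field_simp
    ring
  choose ξ hξ using hmvt
  have hξin : ∀ j < N, (ξ j) ^ 2 < ‖a‖ ^ 2 ∧ u ≤ ξ j ∧ ξ j ≤ v := by
    intro j hj
    have h1 := (hxlow j).trans (hξ j hj).1.le
    have h2 := (hξ j hj).2.1.le.trans (hxup _ (by omega))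
    exact ⟨hin _ h1 h2, h1, h2⟩
  refine kuzmin_landau
    (fun j : ℕ => Complex.exp (Complex.I * (n : ℂ) * ((thetaF a b (x j) : ℝ) : ℂ)))
    (fun j => 2 * Real.pi * σ - 4 * tF a b (ξ j)) N l hl ?_ ?_ ?_ ?_ ?_
  · intro j _
    have : Complex.I * (n : ℂ) * ((thetaF a b (x j) : ℝ) : ℂ) =
        ((n * thetaF a b (x j) : ℝ) : ℂ) * Complex.I := by push_cast; ring
    simp only [this, Complex.norm_exp_ofReal_mul_I, le_refl]
  · intro j hj
    have h := (hξ j hj).2.2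
    have h' : (n : ℂ) * (((thetaF a b (x (j + 1)) : ℝ) : ℂ) - ((thetaF a b (x j) : ℝ) : ℂ)) =
        -4 * ((tF a b (ξ j) : ℝ) : ℂ) := by exact_mod_cast h
    have h2 : Complex.I * ((2 * Real.pi * σ - 4 * tF a b (ξ j) : ℝ) : ℂ) =
        Complex.I * (n : ℂ) * (((thetaF a b (x (j + 1)) : ℝ) : ℂ) - ((thetaF a b (x j) : ℝ) : ℂ))
          + σ * (2 * Real.pi * Complex.I) := by
      push_cast
      linear_combination -Complex.I * h'
    rw [h2, Complex.exp_add, Complex.exp_int_mul_two_pi_mul_I, mul_one, ← Complex.exp_add]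
    congr 1
    ring
  · intro j hj
    have := tF_mono ha hb hab1 (hξin j (by omega)).1 (hξin (j + 1) hj).1
      ((hξ j (by omega)).2.1.le.trans (hξ (j + 1) hj).1.le)
    linarith
  · intro j hj
    have := tF_mono ha hb hab1 (hξin j hj).1 hv (hξin j hj).2.2
    linarith
  · intro j hj
    have := tF_mono ha hb hab1 hu (hξin j hj).1 (hξin j hj).2.1
    linarith

/-- Lemma `RmLb`(2): if `0 ∈ [α,β]` and `1/6 < δ < 1/2`, the partial
exponential sums `∑_{j=0}^{k} e^{inθ(y_j/n)}` are `≤ C n^{1/2+δ}` uniformly in `n` and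
`k ≤ s_n`. -/
theorem stmt11 (a b : ℂ) (hab1 : ‖a‖ ^ 2 + ‖b‖ ^ 2 = 1) (hab : a * b ≠ 0)
    (α β : ℝ) (hα : -‖a‖ < α) (hαβ : α < β) (hβ : β < ‖a‖)
    (h0 : 0 ∈ Set.Icc α β) (δ : ℝ) (hδ1 : 1 / 6 < δ) (hδ2 : δ < 1 / 2) :
    ∃ C : ℝ, 0 < C ∧
      ∀ n : ℕ, 0 < n → ∀ m : ℤ,
        ‖∑ y ∈ (Tset α β n).filter (· ≤ m),
            Complex.exp (Complex.I * (n : ℂ) * ((thetaF a b ((y : ℝ) / (n : ℝ)) : ℝ) : ℂ))‖ ≤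
          C * (n : ℝ) ^ ((1 : ℝ) / 2 + δ) := by
  have ha : 0 < ‖a‖ := norm_pos_iff.2 (left_ne_zero_of_mul hab)
  have hb : 0 < ‖b‖ := norm_pos_iff.2 (right_ne_zero_of_mul hab)
  have hpi := Real.pi_pos
  set c : ℝ := max (-α) β with hc
  have hc0 : 0 ≤ c := h0.2.trans (le_max_right _ _)
  have hca : c < ‖a‖ := max_lt (by linarith) hβ
  have hc2 : c ^ 2 < ‖a‖ ^ 2 := by nlinarith
  have hcα : -c ≤ α := by linarith [le_max_left (-α) β]
  have hcβ : β ≤ c := le_max_right _ _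
  have hε : 0 < 2 * Real.pi - 4 * tF a b c := by
    linarith [tF_lt_pi_div_two ha hab1 hc2]
  -- On `|η| ≥ |a| / (2 √n)` the increments keep distance `κ / √n` from `2πℤ`: the first entry
  -- of the minimum controls the neighbourhood of `0`, the second one that of `±2π`.
  obtain ⟨κ, hκ, hκ1, hκ2⟩ : ∃ κ : ℝ, 0 < κ ∧ κ ≤ 2 * ‖b‖ * ‖a‖ ∧
      κ ≤ 2 * Real.pi - 4 * tF a b c :=
    ⟨min (2 * ‖b‖ * ‖a‖) (2 * Real.pi - 4 * tF a b c), lt_min (by positivity) hε,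
      min_le_left _ _, min_le_right _ _⟩
  refine ⟨8 + 4 * Real.pi / κ, by positivity, fun n hn m => ?_⟩
  have hn1 : (1 : ℝ) ≤ n := by exact_mod_cast hn
  set r : ℝ := Real.sqrt n with hr
  have hr1 : 1 ≤ r := Real.one_le_sqrt.2 hn1
  have hrr : r * r = n := Real.mul_self_sqrt (by linarith)
  have hrn : r ≤ (n : ℝ) ^ ((1 : ℝ) / 2 + δ) := by
    rw [hr, Real.sqrt_eq_rpow]
    exact Real.rpow_le_rpow_of_exponent_le hn1 (by linarith)
  refine le_trans ?_ (mul_le_mul_of_nonneg_left hrn (by positivity))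
  set K : ℤ := ⌈r⌉ with hK
  have hKr : r ≤ K := Int.le_ceil r
  have hKr' : (K : ℝ) < r + 1 := Int.ceil_lt_add_one r
  set w : ℝ := ‖a‖ / 2 / r with hw
  have hw0 : 0 < w := by positivity
  have hwa : w < ‖a‖ := by
    have : w ≤ ‖a‖ / 2 := div_le_self (by positivity) hr1
    linarith
  have hw2 : w ^ 2 < ‖a‖ ^ 2 := by nlinarith
  have hnw : (n : ℝ) * w ≤ r := by
    have ha1 : ‖a‖ ≤ 1 := by nlinarith
    have : (n : ℝ) * w = ‖a‖ / 2 * r := by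
      rw [← hrr, hw]; field_simp
    rw [this]
    nlinarith
  have hl : 0 < κ / r := by positivity
  have hlκ : κ / r ≤ κ := div_le_self hκ.le hr1
  have htw : κ / r ≤ 4 * tF a b w := by
    have h1 := tF_lower ha hb hab1 hw2 hw0.le
    have h2 : κ / r ≤ 2 * ‖b‖ * ‖a‖ / r := by gcongr
    have h3 : 2 * ‖b‖ * ‖a‖ / r = 4 * (‖b‖ * w) := by rw [hw]; ring
    linarith
  set G : ℤ → ℂ := fun y =>
    Complex.exp (Complex.I * (n : ℂ) * ((thetaF a b ((y : ℝ) / (n : ℝ)) : ℝ) : ℂ)) with hG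
  set F := (Tset α β n).filter (· ≤ m) with hF
  have hFmem : ∀ y, y ∈ F ↔
      ((⌈(n : ℝ) * α⌉ ≤ y ∧ y ≤ ⌊(n : ℝ) * β⌋) ∧ Even ((n : ℤ) + y)) ∧ y ≤ m := by
    intro y
    simp [hF, Tset]
  have hright : ‖∑ y ∈ F.filter (fun y => K ≤ y), G y‖ ≤ 2 + 2 * Real.pi / (κ / r) := by
    have hset : F.filter (fun y => K ≤ y) =
        (Finset.Icc (max ⌈(n : ℝ) * α⌉ K) (min ⌊(n : ℝ) * β⌋ m)).filter
          (fun y => Even ((n : ℤ) + y)) := by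
      ext y
      simp only [Finset.mem_filter, hFmem, Finset.mem_Icc, max_le_iff, le_min_iff]
      tauto
    rw [hset]
    refine block_bound ha hb hab1 n hn 1 (κ / r) w c hl hw2 hc2 ?_ ?_ _ _ ?_ ?_
    · push_cast; linarith
    · push_cast; linarith
    · have : ((K : ℤ) : ℝ) ≤ ((max ⌈(n : ℝ) * α⌉ K : ℤ) : ℝ) := by
        exact_mod_cast le_max_right _ _
      linarith
    · have h1 : ((min ⌊(n : ℝ) * β⌋ m : ℤ) : ℝ) ≤ (⌊(n : ℝ) * β⌋ : ℝ) := by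
        exact_mod_cast min_le_left _ _
      have h2 := Int.floor_le ((n : ℝ) * β)
      have h3 : (n : ℝ) * β ≤ n * c := by gcongr
      linarith
  have hleft : ‖∑ y ∈ (F.filter (fun y => ¬ K ≤ y)).filter (fun y => y ≤ -K), G y‖ ≤
      2 + 2 * Real.pi / (κ / r) := by
    have hK0 : 0 < K := by
      have : (0 : ℝ) < K := by linarith
      exact_mod_cast this
    have hset : (F.filter (fun y => ¬ K ≤ y)).filter (fun y => y ≤ -K) =
        (Finset.Icc ⌈(n : ℝ) * α⌉ (min (min ⌊(n : ℝ) * β⌋ m) (-K))).filter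
          (fun y => Even ((n : ℤ) + y)) := by
      ext y
      simp only [Finset.mem_filter, hFmem, Finset.mem_Icc, le_min_iff]
      constructor
      · tauto
      · rintro ⟨⟨h1, ⟨h2, h3⟩, h4⟩, h5⟩
        exact ⟨⟨⟨⟨⟨h1, h2⟩, h5⟩, h3⟩, by omega⟩, h4⟩
    rw [hset]
    refine block_bound ha hb hab1 n hn 0 (κ / r) (-c) (-w) hl (by rwa [neg_sq]) (by rwa [neg_sq])
      ?_ ?_ _ _ ?_ ?_
    · rw [tF_neg]; push_cast; linarith
    · rw [tF_neg]; push_cast; linarith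
    · have h2 := Int.le_ceil ((n : ℝ) * α)
      have h3 : (n : ℝ) * (-c) ≤ n * α := by gcongr
      linarith
    · have h1 : ((min (min ⌊(n : ℝ) * β⌋ m) (-K) : ℤ) : ℝ) ≤ ((-K : ℤ) : ℝ) := by
        exact_mod_cast min_le_right _ _
      push_cast at h1 ⊢
      linarith
  have hmid : ‖∑ y ∈ (F.filter (fun y => ¬ K ≤ y)).filter (fun y => ¬ y ≤ -K), G y‖ ≤ 4 * r := by
    have hsub : (F.filter (fun y => ¬ K ≤ y)).filter (fun y => ¬ y ≤ -K) ⊆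
        Finset.Ioo (-K) K := by
      intro y
      simp only [Finset.mem_filter, Finset.mem_Ioo]
      omega
    have hcard := Finset.card_le_card hsub
    rw [Int.card_Ioo] at hcard
    have hG1 : ∀ y, ‖G y‖ ≤ 1 := by
      intro y
      have : Complex.I * (n : ℂ) * ((thetaF a b ((y : ℝ) / (n : ℝ)) : ℝ) : ℂ) =
          ((n * thetaF a b ((y : ℝ) / (n : ℝ)) : ℝ) : ℂ) * Complex.I := by push_cast; ring
      simp only [hG, this, Complex.norm_exp_ofReal_mul_I, le_refl]
    refine (norm_sum_le_of_le _ (fun y _ => hG1 y)).trans ?_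
    rw [Finset.sum_const, nsmul_eq_mul, mul_one]
    have hK0 : 0 < K := by
      have : (0 : ℝ) < K := by linarith
      exact_mod_cast this
    have h1 : (((F.filter (fun y => ¬ K ≤ y)).filter (fun y => ¬ y ≤ -K)).card : ℤ) ≤ 2 * K := by
      omega
    have h2 : (((F.filter (fun y => ¬ K ≤ y)).filter (fun y => ¬ y ≤ -K)).card : ℝ) ≤ 2 * K := by
      exact_mod_cast h1
    linarith
  rw [← Finset.sum_filter_add_sum_filter_not F (fun y => K ≤ y),
    ← Finset.sum_filter_add_sum_filter_not (F.filter (fun y => ¬ K ≤ y)) (fun y => y ≤ -K)]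
  refine (norm_add_le _ _).trans ?_
  have h9 := norm_add_le (∑ y ∈ (F.filter (fun y => ¬ K ≤ y)).filter (fun y => y ≤ -K), G y)
    (∑ y ∈ (F.filter (fun y => ¬ K ≤ y)).filter (fun y => ¬ y ≤ -K), G y)
  have h10 : 2 * Real.pi / (κ / r) = 2 * Real.pi / κ * r := by field_simp
  have h11 : 4 * Real.pi / κ = 2 * (2 * Real.pi / κ) := by ring
  rw [h10] at hright hleft
  rw [h11]
  nlinarith
end
end

section
/- Let −|a| < α < β < |a| and let K be a smooth complex-valued function on [α, β]. For each positive integer n, let y₀ < y₁ < ... < y_{s_n} enumerate the integers y with y + n even and nα ≤ y ≤ nβ. Then lim_{n→∞} (2/n) Σ_{j=0}^{s_n} K(y_j/n) e^{i n θ(y_j/n)} = 0. -/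
/-!
The phase satisfies `θ' = -2t`, because `μ'(t(η)) = η` (`hasDerivAt_thetaF`). Passing from `y` to
`y + 2` therefore multiplies `e^{inθ(y/n)}` by `e^{-4it(y/n)}` up to `O(1/n)` (`osc_step`). As
`|t| < π/2` on `(-|a|, |a|)`, the difference `u = e^{-4it} - 1` vanishes only at `η = 0`
(`rotSub_ne_zero`).

If the amplitude has the form `H u` with `H` Lipschitz, each summand is a difference of consecutive
values of `H(y/n) e^{inθ(y/n)}` up to `O(1/n)`, so the sum telescopes and is bounded uniformly in
`n` (`bounded_sum`). A general amplitude `K` is of this form up to a remainder which is at most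
`δ |K|` away from `|η| < δ`, a region with only `O(δn)` points (`norm_sum_le_mul_add`). Dividing by
`n` and letting `δ → 0` gives the limit.
-/

open Filter Topology Asymptotics MeasureTheory

noncomputable section

/-! ### The phase and its derivative -/

/-- The square of the argument `|b|η/(|a|√(1 − η²))` of the arcsine, in closed form, and its bound
by `1` for `|η| < |a|`; the positivity of `1 - η²` makes the square root and the quotient
genuine. -/
lemma sq_arg_lt_one {A B η : ℝ} (hA : 0 < A) (hAB : A ^ 2 + B ^ 2 = 1)
    (h1 : -A < η) (h2 : η < A) :
    (B * η / (A * √(1 - η ^ 2))) ^ 2 = B ^ 2 * η ^ 2 / (A ^ 2 * (1 - η ^ 2)) ∧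
      0 < 1 - η ^ 2 ∧ B ^ 2 * η ^ 2 / (A ^ 2 * (1 - η ^ 2)) < 1 := by
  have hη : η ^ 2 < A ^ 2 := by nlinarith
  have h0 : 0 < 1 - η ^ 2 := by nlinarith
  refine ⟨?_, h0, ?_⟩
  · rw [div_pow, mul_pow, mul_pow, Real.sq_sqrt h0.le]
  · rw [div_lt_one (by positivity)]
    nlinarith

lemma arg_mem_Ioo {A B η : ℝ} (hA : 0 < A) (hAB : A ^ 2 + B ^ 2 = 1)
    (h1 : -A < η) (h2 : η < A) :
    -1 < B * η / (A * √(1 - η ^ 2)) ∧ B * η / (A * √(1 - η ^ 2)) < 1 := by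
  obtain ⟨e, -, h⟩ := sq_arg_lt_one hA hAB h1 h2
  rw [← e] at h
  exact abs_lt.1 ((sq_lt_one_iff_abs_lt_one _).1 h)

lemma contDiffAt_tF {a b : ℂ} (hA : 0 < ‖a‖) (hAB : ‖a‖ ^ 2 + ‖b‖ ^ 2 = 1)
    {η : ℝ} (h1 : -‖a‖ < η) (h2 : η < ‖a‖) : ContDiffAt ℝ 1 (tF a b) η := by
  obtain ⟨l, u⟩ := arg_mem_Ioo hA hAB h1 h2
  obtain ⟨-, h0, -⟩ := sq_arg_lt_one hA hAB h1 h2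
  have hs : √(1 - η ^ 2) ≠ 0 := (Real.sqrt_pos.2 h0).ne'
  unfold tF
  refine (Real.contDiffAt_arcsin l.ne' u.ne).comp η (f := fun η => ‖b‖ * η / (‖a‖ * √(1 - η ^ 2))) ?_
  refine ContDiffAt.div (by fun_prop) ?_ (mul_ne_zero hA.ne' hs)
  exact contDiffAt_const.mul (ContDiffAt.sqrt (by fun_prop) (ne_of_gt h0))

/-- Since `μ'(t(η)) = η`, the two terms of `θ'(η)` containing `t'(η)` cancel. -/
lemma hasDerivAt_thetaF_s12 {a b : ℂ} (hA : 0 < ‖a‖) (hAB : ‖a‖ ^ 2 + ‖b‖ ^ 2 = 1) (hB : 0 < ‖b‖)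
    {η : ℝ} (h1 : -‖a‖ < η) (h2 : η < ‖a‖) :
    HasDerivAt (thetaF a b) (-2 * tF a b η) η := by
  obtain ⟨l, u⟩ := arg_mem_Ioo hA hAB h1 h2
  obtain ⟨e, h0, h⟩ := sq_arg_lt_one hA hAB h1 h2
  have hs : 0 < √(1 - η ^ 2) := Real.sqrt_pos.2 h0
  have ht : HasDerivAt (tF a b) (deriv (tF a b) η) η :=
    ((contDiffAt_tF hA hAB h1 h2).differentiableAt one_ne_zero).hasDerivAt
  have hsin : Real.sin (tF a b η) = ‖b‖ * η / (‖a‖ * √(1 - η ^ 2)) :=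
    Real.sin_arcsin l.le u.le
  have hcos : 1 - (‖a‖ * Real.cos (tF a b η)) ^ 2 = (‖b‖ / √(1 - η ^ 2)) ^ 2 := by
    rw [mul_pow, Real.cos_sq', hsin, e, div_pow, Real.sq_sqrt h0.le]
    field_simp
    linear_combination -(1 - η ^ 2) * hAB
  have hpos : 0 < (‖b‖ / √(1 - η ^ 2)) ^ 2 := by positivity
  have hne1 : ‖a‖ * Real.cos (tF a b η) ≠ -1 := by
    intro h; rw [h] at hcos; norm_num at hcos; linarith
  have hne2 : ‖a‖ * Real.cos (tF a b η) ≠ 1 := by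
    intro h; rw [h] at hcos; norm_num at hcos; linarith
  have hmu : HasDerivAt (muF a) η (tF a b η) := by
    have := (Real.hasDerivAt_arccos hne1 hne2).comp (tF a b η)
      ((Real.hasDerivAt_cos (tF a b η)).const_mul ‖a‖)
    refine this.congr_deriv ?_
    rw [hcos, Real.sqrt_sq (by positivity), hsin]
    field_simp
  have := ((hmu.comp η ht).const_mul 2).sub (((hasDerivAt_id η).const_mul 2).mul ht)
  refine this.congr_deriv ?_
  simp
  ring

/-- `e^{-4it(η)} - 1`: the factor `e^{2iθ'(η)}` by which `e^{inθ(y/n)}` is multiplied, to first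
order, when `y = nη` increases by `2`, minus one. -/
def rotSub (a b : ℂ) (η : ℝ) : ℂ := Complex.exp (Complex.I * ((-4 * tF a b η : ℝ) : ℂ)) - 1

/-- `|4t(η)| < 2π`, so the only resonance is at `t(η) = 0`, that is at `η = 0`. -/
lemma rotSub_ne_zero {a b : ℂ} (hA : 0 < ‖a‖) (hAB : ‖a‖ ^ 2 + ‖b‖ ^ 2 = 1) (hB : 0 < ‖b‖)
    {η : ℝ} (h1 : -‖a‖ < η) (h2 : η < ‖a‖) (hη : η ≠ 0) : rotSub a b η ≠ 0 := by
  obtain ⟨l, u⟩ := arg_mem_Ioo hA hAB h1 h2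
  obtain ⟨-, h0, -⟩ := sq_arg_lt_one hA hAB h1 h2
  have hs : √(1 - η ^ 2) ≠ 0 := (Real.sqrt_pos.2 h0).ne'
  have t1 : -(Real.pi / 2) < tF a b η := Real.neg_pi_div_two_lt_arcsin.2 l
  have t2 : tF a b η < Real.pi / 2 := Real.arcsin_lt_pi_div_two.2 u
  have t0 : tF a b η ≠ 0 := by
    unfold tF
    rw [Ne, Real.arcsin_eq_zero_iff]
    positivity
  intro h
  obtain ⟨k, hk⟩ := Complex.exp_eq_one_iff.1 (sub_eq_zero.1 h)
  have hk' : -4 * tF a b η = k * (2 * Real.pi) := by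
    have := congrArg Complex.im hk
    simpa using this
  have hpi := Real.pi_pos
  have k1 : (k : ℝ) < 1 := by nlinarith
  have k2 : (-1 : ℝ) < k := by nlinarith
  have k0 : k = 0 := by
    have : k < 1 := by exact_mod_cast k1
    have : -1 < k := by exact_mod_cast k2
    omega
  rw [k0, Int.cast_zero, zero_mul] at hk'
  exact t0 (by linarith)

/-! ### The summation set -/

/-- The summation set is an arithmetic progression of step `2`. -/
lemma exists_Tset_param (α β : ℝ) (n : ℕ) : ∃ (y₀ : ℤ) (N : ℕ),
    ∀ {E : Type} [AddCommMonoid E] (f : ℤ → E),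
      ∑ y ∈ Tset α β n, f y = ∑ j ∈ Finset.range N, f (y₀ + 2 * j) := by
  obtain ⟨y₀, hy₀, hy₁, he⟩ : ∃ y₀ : ℤ, ⌈(n : ℝ) * α⌉ ≤ y₀ ∧ y₀ ≤ ⌈(n : ℝ) * α⌉ + 1 ∧
      Even ((n : ℤ) + y₀) := by
    rcases Int.even_or_odd ((n : ℤ) + ⌈(n : ℝ) * α⌉) with h | h
    · exact ⟨_, le_rfl, by omega, h⟩
    · exact ⟨⌈(n : ℝ) * α⌉ + 1, by omega, le_rfl, by rw [← add_assoc]; exact h.add_one⟩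
  refine ⟨y₀, ((⌊(n : ℝ) * β⌋ - y₀) / 2 + 1).toNat, fun f => ?_⟩
  symm
  refine Finset.sum_bij (fun (j : ℕ) _ => y₀ + 2 * (j : ℤ)) ?_ ?_ ?_ (fun _ _ => rfl)
  · intro j hj
    simp only [Finset.mem_range, Tset, Finset.mem_filter, Finset.mem_Icc] at hj ⊢
    refine ⟨⟨by omega, by omega⟩, ?_⟩
    rw [← add_assoc]
    exact he.add (even_two_mul _)
  · intro i _ j _ h
    simpa using h
  · intro y hy
    simp only [Tset, Finset.mem_filter, Finset.mem_Icc] at hy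
    obtain ⟨⟨h1, h2⟩, h3⟩ := hy
    obtain ⟨r, hr⟩ := he
    obtain ⟨s, hs⟩ := h3
    exact ⟨(s - r).toNat, by simp only [Finset.mem_range]; omega, by omega⟩

lemma mem_Icc_of_mem_Tset {α β : ℝ} {n : ℕ} (hn : 0 < n) {y : ℤ} (hy : y ∈ Tset α β n) :
    (y : ℝ) / n ∈ Set.Icc α β := by
  simp only [Tset, Finset.mem_filter, Finset.mem_Icc, Int.ceil_le, Int.le_floor] at hy
  have hn' : (0 : ℝ) < n := by exact_mod_cast hn
  exact ⟨by rw [le_div_iff₀ hn']; linarith [hy.1.1], by rw [div_le_iff₀ hn']; linarith [hy.1.2]⟩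

lemma card_Icc_ceil_floor_le {x y : ℝ} (h : x ≤ y) :
    ((Finset.Icc ⌈x⌉ ⌊y⌋).card : ℝ) ≤ y - x + 1 := by
  rw [Int.card_Icc]
  have h1 := Int.floor_le y
  have h2 := Int.le_ceil x
  rcases le_or_gt 0 (⌊y⌋ + 1 - ⌈x⌉) with h0 | h0
  · have : (((⌊y⌋ + 1 - ⌈x⌉).toNat : ℤ) : ℝ) = ((⌊y⌋ + 1 - ⌈x⌉ : ℤ) : ℝ) := by
      rw [Int.toNat_of_nonneg h0]
    rw [Int.cast_natCast] at this
    rw [this]; push_cast; linarith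
  · rw [Int.toNat_of_nonpos h0.le]; simp; linarith

/-! ### Oscillating sums -/

/-- The oscillating factor `e^{inθ(y/n)}`. -/
def osc (θ : ℝ → ℝ) (n : ℕ) (y : ℤ) : ℂ :=
  Complex.exp (Complex.I * (n : ℂ) * ((θ ((y : ℝ) / (n : ℝ)) : ℝ) : ℂ))

lemma osc_eq (θ : ℝ → ℝ) (n : ℕ) (y : ℤ) :
    osc θ n y = Complex.exp (Complex.I * ((n * θ ((y : ℝ) / n) : ℝ) : ℂ)) := by
  unfold osc; push_cast; ring_nf

lemma norm_osc (θ : ℝ → ℝ) (n : ℕ) (y : ℤ) : ‖osc θ n y‖ = 1 := by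
  rw [osc_eq, mul_comm, Complex.norm_exp_ofReal_mul_I]

lemma norm_exp_I_sub_le (x y : ℝ) :
    ‖Complex.exp (Complex.I * x) - Complex.exp (Complex.I * y)‖ ≤ |x - y| := by
  have : Complex.exp (Complex.I * x) - Complex.exp (Complex.I * y)
      = Complex.exp (y * Complex.I) * (Complex.exp (Complex.I * ((x - y : ℝ) : ℂ)) - 1) := by
    rw [mul_sub, ← Complex.exp_add]; push_cast; ring_nf
  rw [this, norm_mul, Complex.norm_exp_ofReal_mul_I, one_mul]
  exact Real.norm_exp_I_mul_ofReal_sub_one_le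

/-- Linearising the phase: moving from `y` to `y + 2` multiplies the oscillating factor by
`e^{2iθ'(y/n)}` up to `O(1/n)`; here `θ' = -2t`. -/
lemma osc_step {θ t : ℝ → ℝ} {α β : ℝ} {L : NNReal}
    (hθ : ∀ η ∈ Set.Icc α β, HasDerivAt θ (-2 * t η) η)
    (hL : LipschitzOnWith L t (Set.Icc α β)) {n : ℕ} (hn : 0 < n) {y : ℤ}
    (h1 : (y : ℝ) / n ∈ Set.Icc α β) (h2 : ((y + 2 : ℤ) : ℝ) / n ∈ Set.Icc α β) :
    ‖Complex.exp (Complex.I * ((-4 * t ((y : ℝ) / n) : ℝ) : ℂ)) * osc θ n y - osc θ n (y + 2)‖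
      ≤ 8 * L / n := by
  have hn' : (0 : ℝ) < n := by exact_mod_cast hn
  set η := (y : ℝ) / n with hη
  have hη2 : ((y + 2 : ℤ) : ℝ) / n = η + 2 / n := by push_cast; rw [hη]; ring
  rw [hη2] at h2
  have hsub : Set.Icc η (η + 2 / n) ⊆ Set.Icc α β := Set.Icc_subset_Icc h1.1 h2.2
  have hpos : 0 < 2 / (n : ℝ) := by positivity
  have key := (convex_Icc η (η + 2 / n)).norm_image_sub_le_of_norm_hasDerivWithin_le
    (f := fun x => θ x + 2 * t η * x) (f' := fun x => -2 * t x + 2 * t η)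
    (C := 2 * (L * (2 / n))) (x := η) (y := η + 2 / n)
    (fun x hx => by
      have := (hθ x (hsub hx)).add ((hasDerivAt_id x).const_mul (2 * t η))
      rw [mul_one] at this
      exact this.hasDerivWithinAt)
    (fun x hx => by
      have hd := hL.dist_le_mul x (hsub hx) η h1
      rw [Real.dist_eq, Real.dist_eq] at hd
      have hx' : |x - η| ≤ 2 / n := by rw [abs_le]; constructor <;> linarith [hx.1, hx.2]
      have : -2 * t x + 2 * t η = -2 * (t x - t η) := by ring
      rw [this, norm_mul, Real.norm_eq_abs, Real.norm_eq_abs]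
      norm_num
      exact hd.trans (mul_le_mul_of_nonneg_left hx' L.2))
    ⟨le_rfl, by linarith⟩ ⟨by linarith, le_rfl⟩
  rw [osc_eq, osc_eq, ← Complex.exp_add, ← mul_add, ← Complex.ofReal_add, hη2]
  refine (norm_exp_I_sub_le _ _).trans ?_
  rw [Real.norm_eq_abs, Real.norm_eq_abs, add_sub_cancel_left, abs_of_pos hpos] at key
  have e : -4 * t η + n * θ η - n * θ (η + 2 / n)
      = -(n * (θ (η + 2 / n) + 2 * t η * (η + 2 / n) - (θ η + 2 * t η * η))) := by
    field_simp; ring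
  rw [e, abs_neg, abs_mul, abs_of_pos hn']
  refine (mul_le_mul_of_nonneg_left key hn'.le).trans (le_of_eq ?_)
  field_simp; ring

/-- Summation by parts: sums whose amplitude carries the factor `e^{-4it} - 1` are bounded
uniformly in `n`, since they telescope up to `O(n)` errors of size `O(1/n)`. -/
lemma bounded_sum {θ t : ℝ → ℝ} {α β : ℝ} (hαβ : α ≤ β) {L M : NNReal}
    (hθ : ∀ η ∈ Set.Icc α β, HasDerivAt θ (-2 * t η) η)
    (hL : LipschitzOnWith L t (Set.Icc α β)) {H : ℝ → ℂ} {B : ℝ}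
    (hM : LipschitzOnWith M H (Set.Icc α β)) (hB : ∀ η ∈ Set.Icc α β, ‖H η‖ ≤ B) :
    ∃ C : ℝ, ∀ n : ℕ, 0 < n → ‖∑ y ∈ Tset α β n, H ((y : ℝ) / n) *
      (Complex.exp (Complex.I * ((-4 * t ((y : ℝ) / n) : ℝ) : ℂ)) - 1) * osc θ n y‖ ≤ C := by
  have hB0 : 0 ≤ B := (norm_nonneg _).trans (hB α ⟨le_rfl, hαβ⟩)
  set D : ℝ := B * (8 * L) + M * 2 with hD
  have hD0 : 0 ≤ D := by positivity
  refine ⟨(β - α + 1) * D + 4 * B, fun n hn => ?_⟩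
  have hn' : (0 : ℝ) < n := by exact_mod_cast hn
  have hn1 : (1 : ℝ) ≤ n := by exact_mod_cast hn
  obtain ⟨y₀, N, hN⟩ := exists_Tset_param α β n
  have hcard : (N : ℝ) ≤ n * (β - α) + 1 := by
    have h1 : (Tset α β n).card = N := by simpa using hN (fun _ => (1 : ℕ))
    rw [← h1]
    have h2 : ((Tset α β n).card : ℝ) ≤ ((Finset.Icc ⌈(n : ℝ) * α⌉ ⌊(n : ℝ) * β⌋).card : ℝ) := by
      exact_mod_cast Finset.card_filter_le _ _
    have h3 := card_Icc_ceil_floor_le (mul_le_mul_of_nonneg_left hαβ hn'.le)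
    linarith
  -- Testing the reindexing on an indicator function shows that the points lie in `Tset`.
  have hmem : ∀ j < N, (((y₀ + 2 * j : ℤ)) : ℝ) / n ∈ Set.Icc α β := by
    intro j hj
    apply mem_Icc_of_mem_Tset hn
    have h := hN (fun y => if y = y₀ + 2 * j then 1 else 0)
    by_contra hc
    rw [Finset.sum_ite_eq' , if_neg hc] at h
    have h' := (Finset.sum_eq_zero_iff.1 h.symm) j (Finset.mem_range.2 hj)
    simp at h'
  rw [hN]
  rcases N with _ | N
  · simp; positivity
  rw [Finset.sum_range_succ]
  -- The sequence whose increments approximate the summands.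
  set F : ℕ → ℂ := fun j => H (((y₀ + 2 * j : ℤ) : ℝ) / n) * osc θ n (y₀ + 2 * j) with hF
  have hFB : ∀ j < N + 1, ‖F j‖ ≤ B := by
    intro j hj
    rw [hF]; simp only [norm_mul, norm_osc, mul_one]
    exact hB _ (hmem j hj)
  have hstep : ∀ j ∈ Finset.range N, ‖H (((y₀ + 2 * j : ℤ) : ℝ) / n) *
      (Complex.exp (Complex.I * ((-4 * t (((y₀ + 2 * j : ℤ) : ℝ) / n) : ℝ) : ℂ)) - 1) *
        osc θ n (y₀ + 2 * j) - (F (j + 1) - F j)‖ ≤ D / n := by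
    intro j hj
    rw [Finset.mem_range] at hj
    have m1 := hmem j (by omega)
    have m2 := hmem (j + 1) (by omega)
    have ey : y₀ + 2 * ((j + 1 : ℕ) : ℤ) = y₀ + 2 * j + 2 := by push_cast; ring
    rw [ey] at m2
    simp only [hF, ey]
    have s1 := osc_step hθ hL hn m1 m2
    have s2 : ‖H (((y₀ + 2 * j : ℤ) : ℝ) / n) - H (((y₀ + 2 * j + 2 : ℤ) : ℝ) / n)‖
        ≤ M * (2 / n) := by
      have := hM.dist_le_mul _ m1 _ m2
      rw [dist_eq_norm, Real.dist_eq] at this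
      refine this.trans (le_of_eq ?_)
      congr 1
      rw [abs_sub_comm, ← sub_div, abs_of_nonneg]
      · push_cast; ring
      · push_cast; ring_nf; positivity
    set E := Complex.exp (Complex.I * ((-4 * t (((y₀ + 2 * j : ℤ) : ℝ) / n) : ℝ) : ℂ))
    set g := osc θ n (y₀ + 2 * j)
    set g' := osc θ n (y₀ + 2 * j + 2) with hg'
    set h := H (((y₀ + 2 * j : ℤ) : ℝ) / n) with hh
    set h' := H (((y₀ + 2 * j + 2 : ℤ) : ℝ) / n)
    have e : h * (E - 1) * g - (h' * g' - h * g) = h * (E * g - g') + (h - h') * g' := by ring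
    rw [e]
    refine (norm_add_le _ _).trans ?_
    rw [norm_mul, norm_mul, hg', norm_osc, mul_one]
    have s3 : ‖h‖ * ‖E * g - g'‖ ≤ B * (8 * L / n) :=
      mul_le_mul (hB _ m1) s1 (norm_nonneg _) hB0
    calc _ ≤ B * (8 * L / n) + M * (2 / n) := add_le_add s3 s2
      _ = D / n := by rw [hD]; ring
  have hsum := (norm_sum_le _ _).trans (Finset.sum_le_sum hstep)
  rw [Finset.sum_sub_distrib, Finset.sum_range_sub, Finset.sum_const, Finset.card_range,
    nsmul_eq_mul] at hsum
  have hlast : ‖H (((y₀ + 2 * N : ℤ) : ℝ) / n) *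
      (Complex.exp (Complex.I * ((-4 * t (((y₀ + 2 * N : ℤ) : ℝ) / n) : ℝ) : ℂ)) - 1) *
        osc θ n (y₀ + 2 * N)‖ ≤ B * 2 := by
    rw [norm_mul, norm_mul, norm_osc, mul_one]
    refine mul_le_mul (hB _ (hmem N (by omega))) ?_ (norm_nonneg _) hB0
    refine (norm_sub_le _ _).trans ?_
    rw [mul_comm, Complex.norm_exp_ofReal_mul_I]
    norm_num
  have hND : (N : ℝ) * (D / n) ≤ (β - α + 1) * D := by
    rw [← mul_div_assoc, div_le_iff₀ hn']
    have : (N : ℝ) ≤ (β - α + 1) * n := by push_cast at hcard; nlinarith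
    nlinarith
  have hF0 := hFB 0 (by omega)
  have hFN := hFB N (by omega)
  set S := ∑ j ∈ Finset.range N, H (((y₀ + 2 * j : ℤ) : ℝ) / n) *
      (Complex.exp (Complex.I * ((-4 * t (((y₀ + 2 * j : ℤ) : ℝ) / n) : ℝ) : ℂ)) - 1) *
        osc θ n (y₀ + 2 * j)
  have hS : ‖S‖ ≤ ‖S - (F N - F 0)‖ + (‖F N‖ + ‖F 0‖) := by
    calc ‖S‖ = ‖(S - (F N - F 0)) + (F N - F 0)‖ := by congr 1; ring
      _ ≤ _ := (norm_add_le _ _).trans (add_le_add le_rfl (norm_sub_le _ _))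
  refine (norm_add_le _ _).trans ?_
  linarith

/-- The sum is at most an arbitrarily small multiple of `n` plus a constant. With
`u = e^{-4it} - 1`, write `K = H u + K ε / (|u|² + ε)`, where `H = K conj(u) / (|u|² + ε)` is `C¹`
on all of `[α, β]`. The first part has bounded sums by summation by parts. The second part is small
where `|η| ≥ δ`, as `|u|` is bounded below there, and only `O(δn)` points have `|η| < δ`. -/
lemma norm_sum_le_mul_add {a b : ℂ} (hab1 : ‖a‖ ^ 2 + ‖b‖ ^ 2 = 1) (hA : 0 < ‖a‖) (hB : 0 < ‖b‖)
    {α β : ℝ} (hα : -‖a‖ < α) (hαβ : α < β) (hβ : β < ‖a‖)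
    {K : ℝ → ℂ} (hK : ContDiffOn ℝ 1 K (Set.Icc α β)) {P : ℝ} (hP0 : 0 < P)
    (hP : ∀ η ∈ Set.Icc α β, ‖K η‖ ≤ P) {δ : ℝ} (hδ : 0 < δ) :
    ∃ C : ℝ, ∀ n : ℕ, 0 < n →
      ‖∑ y ∈ Tset α β n, K ((y : ℝ) / n) * osc (thetaF a b) n y‖
        ≤ P * (β - α + 3) * δ * n + C := by
  have hin : ∀ η ∈ Set.Icc α β, -‖a‖ < η ∧ η < ‖a‖ :=
    fun η h => ⟨hα.trans_le h.1, h.2.trans_lt hβ⟩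
  have ht : ContDiffOn ℝ 1 (tF a b) (Set.Icc α β) := fun η h =>
    (contDiffAt_tF hA hab1 (hin η h).1 (hin η h).2).contDiffWithinAt
  have hu : ContDiffOn ℝ 1 (rotSub a b) (Set.Icc α β) := by
    unfold rotSub
    have h1 : ContDiffOn ℝ 1 (fun η => ((-4 * tF a b η : ℝ) : ℂ)) (Set.Icc α β) :=
      Complex.ofRealCLM.contDiff.comp_contDiffOn (contDiffOn_const.mul ht)
    exact ((contDiffOn_const.mul h1).cexp).sub contDiffOn_const
  obtain ⟨m, hm0, hm⟩ : ∃ m : ℝ, 0 < m ∧ ∀ η ∈ Set.Icc α β, δ ≤ |η| →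
      m ≤ Complex.normSq (rotSub a b η) := by
    have hc : IsCompact (Set.Icc α β ∩ {η | δ ≤ |η|}) :=
      isCompact_Icc.inter_right (isClosed_le continuous_const continuous_abs)
    have hcont : ContinuousOn (fun η => Complex.normSq (rotSub a b η))
        (Set.Icc α β ∩ {η | δ ≤ |η|}) :=
      Complex.continuous_normSq.comp_continuousOn (hu.continuousOn.mono Set.inter_subset_left)
    rcases (Set.Icc α β ∩ {η | δ ≤ |η|}).eq_empty_or_nonempty with h | h
    · refine ⟨1, one_pos, fun η h1 h2 => ?_⟩
      exact absurd (show η ∈ Set.Icc α β ∩ {η | δ ≤ |η|} from ⟨h1, h2⟩) (by simp [h])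
    · obtain ⟨x, hx, hmin⟩ := hc.exists_isMinOn h hcont
      refine ⟨_, Complex.normSq_pos.2 (rotSub_ne_zero hA hab1 hB (hin x hx.1).1 (hin x hx.1).2 ?_),
        fun η h1 h2 => hmin ⟨h1, h2⟩⟩
      have := hx.2
      rintro rfl
      simp at this
      linarith
  -- With this `ε`, `ε / (|u|² + ε) ≤ δ` wherever `|u|² ≥ m`.
  set ε : ℝ := δ * m with hε
  have hε0 : 0 < ε := by positivity
  set u := rotSub a b with hudef
  set H : ℝ → ℂ := fun η => K η * (starRingEnd ℂ) (u η) / (u η * (starRingEnd ℂ) (u η) + ε) with hH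
  have hden : ∀ η, u η * (starRingEnd ℂ) (u η) + ε = ((Complex.normSq (u η) + ε : ℝ) : ℂ) := by
    intro η; rw [Complex.mul_conj]; push_cast; rfl
  have hdpos : ∀ η, 0 < Complex.normSq (u η) + ε := fun η => by
    have := Complex.normSq_nonneg (u η); linarith
  have hden0 : ∀ η, u η * (starRingEnd ℂ) (u η) + ε ≠ 0 := by
    intro η
    rw [hden, Complex.ofReal_ne_zero]
    exact (hdpos η).ne'
  have hconj : ContDiffOn ℝ 1 (fun η => (starRingEnd ℂ) (u η)) (Set.Icc α β) :=
    Complex.conjCLE.contDiff.comp_contDiffOn hu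
  have hHs : ContDiffOn ℝ 1 H (Set.Icc α β) := by
    have := (hK.mul hconj).mul (((hu.mul hconj).add contDiffOn_const).inv (fun η _ => hden0 η))
    simp only [hH, div_eq_mul_inv]
    exact this
  obtain ⟨L, hL⟩ := ht.exists_lipschitzOnWith one_ne_zero (convex_Icc _ _) isCompact_Icc
  obtain ⟨M, hM⟩ := hHs.exists_lipschitzOnWith one_ne_zero (convex_Icc _ _) isCompact_Icc
  obtain ⟨Q, hQ⟩ := isCompact_Icc.exists_bound_of_continuousOn hHs.continuousOn
  obtain ⟨C, hC⟩ := bounded_sum hαβ.le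
    (fun η h => hasDerivAt_thetaF_s12 hA hab1 hB (hin η h).1 (hin η h).2) hL hM hQ
  refine ⟨C + P + P * δ, fun n hn => ?_⟩
  have hn' : (0 : ℝ) < n := by exact_mod_cast hn
  have hsplit : ∀ η, K η = H η * u η + K η * (ε / (Complex.normSq (u η) + ε) : ℝ) := by
    intro η
    have h0 := hden0 η
    simp only [hH]
    rw [Complex.ofReal_div, ← hden, eq_comm, div_mul_eq_mul_div, ← mul_div_assoc, ← add_div,
      div_eq_iff h0]
    ring
  have hsum : ∑ y ∈ Tset α β n, K ((y : ℝ) / n) * osc (thetaF a b) n y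
      = (∑ y ∈ Tset α β n, H ((y : ℝ) / n) * u ((y : ℝ) / n) * osc (thetaF a b) n y)
        + ∑ y ∈ Tset α β n, K ((y : ℝ) / n) *
          (ε / (Complex.normSq (u ((y : ℝ) / n)) + ε) : ℝ) * osc (thetaF a b) n y := by
    rw [← Finset.sum_add_distrib]
    refine Finset.sum_congr rfl fun y _ => ?_
    rw [← add_mul, ← hsplit]
  have hbd : ∀ y ∈ Tset α β n, ‖K ((y : ℝ) / n) *
      (ε / (Complex.normSq (u ((y : ℝ) / n)) + ε) : ℝ) * osc (thetaF a b) n y‖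
      ≤ P * δ + if |(y : ℝ) / n| < δ then P else 0 := by
    intro y hy
    have hy' := mem_Icc_of_mem_Tset hn hy
    rw [norm_mul, norm_mul, norm_osc, mul_one, Complex.norm_real, Real.norm_eq_abs,
      abs_of_pos (div_pos hε0 (hdpos _))]
    split_ifs with h
    · have : ε / (Complex.normSq (u ((y : ℝ) / n)) + ε) ≤ 1 := by
        rw [div_le_one (hdpos _)]
        linarith [Complex.normSq_nonneg (u ((y : ℝ) / n))]
      have := mul_le_mul (hP _ hy') this (div_pos hε0 (hdpos _)).le hP0.le
      have : 0 < P * δ := by positivity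
      linarith
    · have : ε / (Complex.normSq (u ((y : ℝ) / n)) + ε) ≤ δ := by
        rw [div_le_iff₀ (hdpos _)]
        have := hm _ hy' (not_lt.1 h)
        nlinarith
      have := mul_le_mul (hP _ hy') this (div_pos hε0 (hdpos _)).le hP0.le
      linarith
  have hcard : ((Tset α β n).card : ℝ) ≤ n * (β - α) + 1 := by
    have h2 : ((Tset α β n).card : ℝ) ≤ ((Finset.Icc ⌈(n : ℝ) * α⌉ ⌊(n : ℝ) * β⌋).card : ℝ) := by
      exact_mod_cast Finset.card_filter_le _ _
    have h3 := card_Icc_ceil_floor_le (mul_le_mul_of_nonneg_left hαβ.le hn'.le)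
    linarith
  have hcard2 : (((Tset α β n).filter fun y : ℤ => |(y : ℝ) / n| < δ).card : ℝ)
      ≤ 2 * δ * n + 1 := by
    have hsub : ((Tset α β n).filter fun y : ℤ => |(y : ℝ) / n| < δ) ⊆
        Finset.Icc ⌈-(δ * n)⌉ ⌊δ * n⌋ := by
      intro y hy
      have h := (Finset.mem_filter.1 hy).2
      rw [abs_lt, lt_div_iff₀ hn', div_lt_iff₀ hn'] at h
      rw [Finset.mem_Icc, Int.ceil_le, Int.le_floor]
      constructor <;> linarith [h.1, h.2]
    have h2 : (((Tset α β n).filter fun y : ℤ => |(y : ℝ) / n| < δ).card : ℝ) ≤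
        ((Finset.Icc ⌈-(δ * n)⌉ ⌊δ * n⌋).card : ℝ) := by
      exact_mod_cast Finset.card_le_card hsub
    have h3 := card_Icc_ceil_floor_le (show -(δ * n) ≤ δ * n by nlinarith [mul_pos hδ hn'])
    linarith
  have h2 := (norm_sum_le _ _).trans (Finset.sum_le_sum hbd)
  rw [Finset.sum_add_distrib, Finset.sum_const, nsmul_eq_mul, ← Finset.sum_filter,
    Finset.sum_const, nsmul_eq_mul] at h2
  have h1 := hC n hn
  rw [hsum]
  refine (norm_add_le _ _).trans ?_
  have h3 := mul_le_mul_of_nonneg_right hcard (show 0 ≤ P * δ by positivity)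
  have h4 := mul_le_mul_of_nonneg_right hcard2 hP0.le
  have h5 : 0 ≤ P * δ * n := by positivity
  have h1' : ‖∑ y ∈ Tset α β n, H ((y : ℝ) / n) * u ((y : ℝ) / n) * osc (thetaF a b) n y‖ ≤ C := h1
  linarith

/-- Lemma `RmL`: for a smooth `K` on `[α,β]`,
`(2/n) ∑_{j=0}^{s_n} K(y_j/n) e^{inθ(y_j/n)} → 0` (the sum over the whole enumeration equals
the sum over the finite set `Tset α β n`). -/
theorem stmt12 (a b : ℂ) (hab1 : ‖a‖ ^ 2 + ‖b‖ ^ 2 = 1) (hab : a * b ≠ 0)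
    (α β : ℝ) (hα : -‖a‖ < α) (hαβ : α < β) (hβ : β < ‖a‖)
    (K : ℝ → ℂ) (hK : ContDiffOn ℝ (⊤ : ℕ∞) K (Set.Icc α β)) :
    Tendsto
      (fun n : ℕ => ((2 / (n : ℝ) : ℝ) : ℂ) *
        ∑ y ∈ Tset α β n,
          K ((y : ℝ) / (n : ℝ)) *
            Complex.exp (Complex.I * (n : ℂ) * ((thetaF a b ((y : ℝ) / (n : ℝ)) : ℝ) : ℂ)))
      atTop (𝓝 0) := by
  have hA : 0 < ‖a‖ := norm_pos_iff.2 (left_ne_zero_of_mul hab)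
  have hB : 0 < ‖b‖ := norm_pos_iff.2 (right_ne_zero_of_mul hab)
  have hK1 : ContDiffOn ℝ 1 K (Set.Icc α β) := hK.of_le (by exact_mod_cast le_top)
  obtain ⟨P, hP⟩ := isCompact_Icc.exists_bound_of_continuousOn hK1.continuousOn
  have hP0 : 0 < |P| + 1 := by positivity
  have hP' : ∀ η ∈ Set.Icc α β, ‖K η‖ ≤ |P| + 1 := fun η h => by
    linarith [hP η h, le_abs_self P]
  set R := (|P| + 1) * (β - α + 3) with hR
  have hR0 : 0 < R := mul_pos hP0 (by linarith)
  rw [Metric.tendsto_atTop]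
  intro e he
  obtain ⟨C, hC⟩ := norm_sum_le_mul_add hab1 hA hB hα hαβ hβ hK1 hP0 hP'
    (show 0 < e / (4 * R) by positivity)
  obtain ⟨n₀, hn₀⟩ := exists_nat_gt (4 * |C| / e)
  refine ⟨n₀ + 1, fun n hn => ?_⟩
  have hn0 : 0 < n := by omega
  have hn' : (0 : ℝ) < n := by exact_mod_cast hn0
  have hnn : (n₀ : ℝ) < n := by exact_mod_cast hn
  have hCn : 4 * |C| < e * n := by
    have := hn₀.trans hnn
    rw [div_lt_iff₀ he] at this
    linarith
  have h := hC n hn0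
  unfold osc at h
  rw [dist_zero_right, norm_mul, Complex.norm_real, Real.norm_eq_abs,
    abs_of_pos (by positivity : 0 < 2 / (n : ℝ)), div_mul_eq_mul_div, div_lt_iff₀ hn']
  have e1 : R * (e / (4 * R)) * n = e * n / 4 := by field_simp
  rw [e1] at h
  linarith [le_abs_self C]
end
end

section
/- Fix a sign ε ∈ {+1, −1} and suppose a sequence of integers {y_n} satisfies y_n = ε n|a| + d_n with d_n = O(n^{1/3}). Then for every ψ ∈ ℂ² with ‖ψ‖ = 1, ⟨Uⁿ(δ₀ ⊗ φ), δ_{y_n} ⊗ ψ⟩_{ℓ²} = ω^{−y_n} e^{iπ(n − ε y_n)/2} (1 + (−1)^{n+y_n}) f_ψ(ε i) α₀ n^{−1/3} Ai(ε α₀ n^{−1/3} d_n) + O(n^{−2/3}) as n → ∞, where α₀ = (2/(|a||b|²))^{1/3}. -/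
/-!
Write `α = |a|` and `β = (2/(|a||b|²))^{1/3}`. With `ζ(w) = εi e^{−iεw}`, the symbol `A(ωζ(w))` has
the eigenvalues `±iℓ(±w)`, where `ℓ(w) = exp(−i arcsin(α sin w))`, and the spectral projection onto
`iℓ(w)` is holomorphic in a strip around the real axis. The points `w` and `w + π` are antipodal, and
passing from one to the other exchanges the two eigenvalues up to sign. Hence the amplitude is `1 +
(−1)^{n+y}` times a single integral over one period of any line `Im w = η` in the strip
(`walk_repr`; it is verified by induction on `n`, so no contour deformation is needed).

Near the wall `εy = nα + εd` the oscillating factor of that integral is `exp(i(n q(w) + εd w))` up to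
a constant phase (`phase_id`), with `q(w) = αw − arcsin(α sin w)`. This phase has `w = 0` as its only
critical point in a period, and `q(w) = c w³/3 + O(w⁴)` with `c = α(1 − α²)/2`, so `cβ³ = 1`
(`local_phase`). On the line `Im w = β n^{−1/3}` the factor decays like `exp(−κ n^{2/3} s²)`,
uniformly in `n` (`im_phase`), because `Im q(s + iη) ≥ κηs² − Cη³`. There the integrand can be
compared pointwise with its cubic model, the difference being `O(n^{−1/3})` times a Gaussian of width
`n^{−1/3}` (`pointwise_bound`), which integrates to `O(n^{−2/3})` (`integral_asymp`). The model
integral is the Airy integral on a shifted contour (`Ai_shift`, `Ai_scaled`), and the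
amplitude at `w = 0` is `f_ψ(εi)` (`amp_zero`).
-/

open Filter Topology Asymptotics MeasureTheory

noncomputable section

/-- The standard inner product on `ℂ²`, conjugate-linear in the second argument
(the convention of the paper): `⟨u, v⟩ = u₁ conj(v₁) + u₂ conj(v₂)`. -/
def innC (u v : ℂ × ℂ) : ℂ :=
  u.1 * (starRingEnd ℂ) v.1 + u.2 * (starRingEnd ℂ) v.2

/-- `φ̃(z) = (z + z⁻¹)/2`; on the unit circle this is real (`= Re z`). -/
def phit (z : ℂ) : ℝ := ((z + z⁻¹) / 2).re

/-- The eigenvalue `λ(z) = |a|φ̃(z) + i√(1 − |a|²φ̃(z)²)` of `A(ωz)`, for `z ∈ S¹`. -/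
def lamS (a : ℂ) (z : ℂ) : ℂ :=
  ((‖a‖ * phit z : ℝ) : ℂ) +
    Complex.I * ((Real.sqrt (1 - ‖a‖ ^ 2 * phit z ^ 2) : ℝ) : ℂ)

/-- The normalizing factor `p(z) = √(|b|² + |λ(z) − |a| conj z|²)`. -/
def pnormF (a b : ℂ) (z : ℂ) : ℝ :=
  Real.sqrt (‖b‖ ^ 2 + ‖lamS a z - (‖a‖ : ℂ) * (starRingEnd ℂ) z‖ ^ 2)

/-- The unit eigenvector `u(z) = (1/p(z)) ((ab/|a|)z, λ(z) − |a| conj z)ᵀ` of `A(ωz)`. -/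
def uvec (a b : ℂ) (z : ℂ) : ℂ × ℂ :=
  (((pnormF a b z : ℝ) : ℂ)⁻¹ * (a * b / (‖a‖ : ℂ) * z),
   ((pnormF a b z : ℝ) : ℂ)⁻¹ * (lamS a z - (‖a‖ : ℂ) * (starRingEnd ℂ) z))

/-- `Jψ = (−conj ψ₂, conj ψ₁)ᵀ`. -/
def Jmap (ψ : ℂ × ℂ) : ℂ × ℂ := (-(starRingEnd ℂ) ψ.2, (starRingEnd ℂ) ψ.1)

/-- `f_ψ(z) = ⟨φ, u(z)⟩⟨u(z), ψ⟩`. -/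
def fpsi (a b : ℂ) (φ ψ : ℂ × ℂ) (z : ℂ) : ℂ :=
  innC φ (uvec a b z) * innC (uvec a b z) ψ

/-- `g_ψ(z) = ⟨φ, Ju(z)⟩⟨Ju(z), ψ⟩`. -/
def gpsi (a b : ℂ) (φ ψ : ℂ × ℂ) (z : ℂ) : ℂ :=
  innC φ (Jmap (uvec a b z)) * innC (Jmap (uvec a b z)) ψ

/-- The Airy function `Ai(x) = (1/2π)∫_{−∞}^{∞} e^{i(ξ³/3 + ξx)} dξ`, as an improper
(oscillatory) integral, i.e. the limit of `∫_{−R}^{R}` as `R → ∞`. -/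
def Ai (x : ℝ) : ℂ :=
  ((1 / (2 * Real.pi) : ℝ) : ℂ) *
    limUnder Filter.atTop
      (fun R : ℝ => ∫ t in (-R)..R, Complex.exp (Complex.I * ((t : ℂ) ^ 3 / 3 + (t : ℂ) * (x : ℂ))))

/-! ### The dispersion relation in a strip -/

/-- `v(w) = 1 − α² sin² w`, the radicand of the dispersion relation. -/
def vS (α : ℝ) (w : ℂ) : ℂ := 1 - (α : ℂ) ^ 2 * Complex.sin w ^ 2

/-- `S(w) = √(1 − α² sin² w)`, the principal square root written as `exp (log v / 2)`. -/
def sS (α : ℝ) (w : ℂ) : ℂ := Complex.exp (Complex.log (vS α w) / 2)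

/-- `ℓ(w) = S(w) − iα sin w`, that is `exp (−i arcsin (α sin w))`. -/
def lS (α : ℝ) (w : ℂ) : ℂ := sS α w - Complex.I * α * Complex.sin w

/-- The phase `q(w) = αw − arcsin (α sin w)`, holomorphic near the real axis. -/
def qS (α : ℝ) (w : ℂ) : ℂ := α * w - Complex.I * Complex.log (lS α w)

/-- `r(w) = α − α cos w / S(w)`, the derivative of the phase `qS`. -/
def rS (α : ℝ) (w : ℂ) : ℂ := α - α * Complex.cos w / sS α w

lemma norm_sin_le (w : ℂ) : ‖Complex.sin w‖ ≤ Real.cosh w.im := by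
  rw [Complex.sin, Real.cosh_eq]
  have h1 : ‖Complex.exp (-w * Complex.I)‖ = Real.exp w.im := by
    rw [Complex.norm_exp]; simp
  have h2 : ‖Complex.exp (w * Complex.I)‖ = Real.exp (-w.im) := by
    rw [Complex.norm_exp]; simp
  rw [norm_div, norm_mul, Complex.norm_I, mul_one, Complex.norm_ofNat]
  have := norm_sub_le (Complex.exp (-w * Complex.I)) (Complex.exp (w * Complex.I))
  rw [h1, h2] at this
  linarith

lemma exists_strip {α : ℝ} (h0 : 0 < α) (h1 : α < 1) :
    ∃ ρ : ℝ, 0 < ρ ∧ ∀ w : ℂ, |w.im| ≤ ρ → 0 < (vS α w).re := by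
  have hc : Tendsto (fun x : ℝ => α * Real.cosh x) (𝓝 0) (𝓝 (α * Real.cosh 0)) :=
    (Continuous.tendsto (by fun_prop) 0)
  have hlt : α * Real.cosh 0 < 1 := by simpa using h1
  obtain ⟨ρ, hρ, hball⟩ := Metric.eventually_nhds_iff.1 (hc.eventually (gt_mem_nhds hlt))
  refine ⟨ρ / 2, by positivity, fun w hw => ?_⟩
  have h2 : α * Real.cosh w.im < 1 := by
    apply hball
    rw [Real.dist_eq, sub_zero]; linarith
  have h3 : ‖(α : ℂ) ^ 2 * Complex.sin w ^ 2‖ < 1 := by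
    rw [← mul_pow, norm_pow, norm_mul, Complex.norm_real, Real.norm_of_nonneg h0.le]
    have := mul_le_mul_of_nonneg_left (norm_sin_le w) h0.le
    exact pow_lt_one₀ (by positivity) (by linarith) two_ne_zero
  have h4 := Complex.re_le_norm ((α : ℂ) ^ 2 * Complex.sin w ^ 2)
  rw [vS, Complex.sub_re, Complex.one_re]
  linarith

lemma vS_slit {α : ℝ} {w : ℂ} (h : 0 < (vS α w).re) : vS α w ∈ Complex.slitPlane := Or.inl h

lemma sS_sq {α : ℝ} {w : ℂ} (h : 0 < (vS α w).re) : sS α w ^ 2 = vS α w := by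
  rw [sS, ← Complex.exp_nat_mul]
  have : ((2 : ℕ) : ℂ) * (Complex.log (vS α w) / 2) = Complex.log (vS α w) := by push_cast; ring
  rw [this, Complex.exp_log]
  intro h'; rw [h'] at h; simp at h

lemma sS_ne {α : ℝ} (w : ℂ) : sS α w ≠ 0 := Complex.exp_ne_zero _

lemma sS_re_pos {α : ℝ} (w : ℂ) (h : 0 < (vS α w).re) : 0 < (sS α w).re := by
  rw [sS, Complex.exp_re]
  apply mul_pos (Real.exp_pos _)
  apply Real.cos_pos_of_mem_Ioo
  have : (Complex.log (vS α w) / 2).im = (vS α w).arg / 2 := by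
    rw [show (2 : ℂ) = ((2 : ℝ) : ℂ) by simp, Complex.div_ofReal_im, Complex.log_im]
  rw [this]
  have h2 := (Complex.abs_arg_lt_pi_div_two_iff.2 (Or.inl h))
  rw [abs_lt] at h2
  constructor <;> linarith [Real.pi_pos]

lemma lS_mul {α : ℝ} {w : ℂ} (h : 0 < (vS α w).re) :
    lS α w * (sS α w + Complex.I * α * Complex.sin w) = 1 := by
  have h1 := sS_sq h
  have h2 : lS α w * (sS α w + Complex.I * α * Complex.sin w)
      = sS α w ^ 2 - Complex.I ^ 2 * α ^ 2 * Complex.sin w ^ 2 := by rw [lS]; ring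
  rw [h2, h1, vS, Complex.I_sq]; ring

lemma lS_ne {α : ℝ} {w : ℂ} (h : 0 < (vS α w).re) : lS α w ≠ 0 :=
  left_ne_zero_of_mul_eq_one (lS_mul h)

/-- `ℓ + ℓ⁻¹ = 2S` has positive real part, hence so has `ℓ`. -/
lemma lS_re_pos {α : ℝ} {w : ℂ} (h : 0 < (vS α w).re) : 0 < (lS α w).re := by
  have h1 : (lS α w)⁻¹ = sS α w + Complex.I * α * Complex.sin w :=
    inv_eq_of_mul_eq_one_right (lS_mul h)
  have h2 : lS α w + (lS α w)⁻¹ = 2 * sS α w := by rw [h1, lS]; ring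
  have h3 := congrArg Complex.re h2
  have h4 := sS_re_pos w h
  rw [Complex.add_re, Complex.inv_re] at h3
  have h5 : 0 < Complex.normSq (lS α w) := Complex.normSq_pos.2 (lS_ne h)
  simp at h3
  by_contra hc
  push Not at hc
  have : (lS α w).re / Complex.normSq (lS α w) ≤ 0 := div_nonpos_of_nonpos_of_nonneg hc h5.le
  linarith

lemma hasDerivAt_sS {α : ℝ} {w : ℂ} (h : 0 < (vS α w).re) :
    HasDerivAt (sS α) (-(α : ℂ) ^ 2 * Complex.sin w * Complex.cos w / sS α w) w := by
  have h1 : HasDerivAt (vS α) (-((α : ℂ) ^ 2 * (2 * Complex.sin w * Complex.cos w))) w := by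
    have := (((Complex.hasDerivAt_sin w).pow 2).const_mul ((α : ℂ) ^ 2)).const_sub 1
    refine (this.congr_deriv ?_)
    push_cast; ring
  have h2 := ((h1.clog (vS_slit h)).div_const 2).cexp
  refine h2.congr_deriv ?_
  have h3 : Complex.exp (Complex.log (vS α w) / 2) = sS α w := rfl
  rw [h3, ← sS_sq h]
  have := sS_ne (α := α) w
  field_simp

lemma hasDerivAt_qS {α : ℝ} {w : ℂ} (h : 0 < (vS α w).re) :
    HasDerivAt (qS α) (rS α w) w := by
  have h1 : HasDerivAt (lS α) (-(Complex.I * α * Complex.cos w / sS α w) * lS α w) w := by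
    have := (hasDerivAt_sS h).sub ((Complex.hasDerivAt_sin w).const_mul (Complex.I * α))
    refine this.congr_deriv ?_
    have := sS_ne (α := α) w
    rw [lS]
    field_simp
    linear_combination (α : ℂ) ^ 2 * Complex.sin w * Complex.cos w * (-Complex.I_sq)
  have h2 := ((hasDerivAt_id w).const_mul (α : ℂ)).sub ((h1.clog (Or.inl (lS_re_pos h))).const_mul Complex.I)
  refine h2.congr_deriv ?_
  have := sS_ne (α := α) w
  have := lS_ne h
  rw [rS]
  field_simp
  linear_combination (α : ℂ) * Complex.cos w * Complex.I_sq

lemma exp_qS {α : ℝ} {w : ℂ} (h : 0 < (vS α w).re) :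
    Complex.exp (Complex.I * qS α w) = Complex.exp (Complex.I * α * w) * lS α w := by
  have : Complex.I * qS α w = Complex.I * α * w + Complex.log (lS α w) := by
    rw [qS]; linear_combination - Complex.log (lS α w) * Complex.I_sq
  rw [this, Complex.exp_add, Complex.exp_log (lS_ne h)]

lemma sin_sq_lt {α : ℝ} (h0 : 0 < α) (h1 : α < 1) (s : ℝ) : 0 < 1 - α ^ 2 * Real.sin s ^ 2 := by
  have := Real.sin_sq_le_one s
  have : α ^ 2 < 1 := by nlinarith
  nlinarith [sq_nonneg (Real.sin s)]

lemma sS_real {α : ℝ} (h0 : 0 < α) (h1 : α < 1) (s : ℝ) :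
    sS α s = ((Real.sqrt (1 - α ^ 2 * Real.sin s ^ 2) : ℝ) : ℂ) := by
  have hp := sin_sq_lt h0 h1 s
  have : vS α s = ((1 - α ^ 2 * Real.sin s ^ 2 : ℝ) : ℂ) := by rw [vS]; push_cast; rfl
  rw [sS, this, ← Complex.ofReal_log hp.le, Real.sqrt_eq_rpow, Real.rpow_def_of_pos hp]
  push_cast
  ring_nf

lemma qS_real {α : ℝ} (h0 : 0 < α) (h1 : α < 1) (s : ℝ) : (qS α s).im = 0 := by
  have hp := sin_sq_lt h0 h1 s
  have hl : ‖lS α s‖ = 1 := by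
    rw [← sq_eq_sq₀ (norm_nonneg _) zero_le_one, ← Complex.normSq_eq_norm_sq, lS, sS_real h0 h1,
      Complex.normSq_apply]
    simp [Complex.sin_ofReal_re]
    rw [← sq, Real.sq_sqrt hp.le]; ring
  rw [qS]
  simp [Complex.log_re, hl]

lemma rS_real_pos {α : ℝ} (h0 : 0 < α) (h1 : α < 1) {s : ℝ} (hs : Real.cos s < 1) :
    0 < (rS α s).re := by
  have hp := sin_sq_lt h0 h1 s
  have hS := Real.sqrt_pos.2 hp
  rw [rS, sS_real h0 h1, ← Complex.ofReal_cos]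
  norm_cast
  have : Real.cos s < Real.sqrt (1 - α ^ 2 * Real.sin s ^ 2) := by
    rcases le_or_gt (Real.cos s) 0 with h | h
    · linarith
    · apply Real.lt_sqrt_of_sq_lt
      have h3 := Real.sin_sq_add_cos_sq s
      have h4 : Real.cos s ^ 2 < 1 := by nlinarith
      have h5 : 0 < (1 - α ^ 2) * Real.sin s ^ 2 := by
        apply mul_pos <;> nlinarith
      nlinarith
  have h6 : α * Real.cos s / Real.sqrt (1 - α ^ 2 * Real.sin s ^ 2) < α := by
    rw [div_lt_iff₀ hS]; nlinarith
  linarith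

/-! ### The phase near and away from its critical point -/

lemma sS_zero (α : ℝ) : sS α 0 = 1 := by simp [sS, vS]

lemma vS_zero_re (α : ℝ) : 0 < (vS α 0).re := by simp [vS]

lemma sin_sub_isBigO :
    (fun w : ℂ => Complex.sin w - w) =O[𝓝 0] fun w : ℂ => w ^ 2 := by
  refine IsBigO.of_bound 1 ?_
  filter_upwards [Metric.closedBall_mem_nhds (0 : ℂ) one_pos] with w hw
  have hw : ‖w‖ ≤ 1 := by simpa using hw
  have h1 := Complex.norm_exp_sub_one_sub_id_le (x := -w * Complex.I) (by simpa using hw)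
  have h2 := Complex.norm_exp_sub_one_sub_id_le (x := w * Complex.I) (by simpa using hw)
  have h3 : Complex.sin w - w = ((Complex.exp (-w * Complex.I) - 1 - -w * Complex.I) -
      (Complex.exp (w * Complex.I) - 1 - w * Complex.I)) * Complex.I / 2 := by
    rw [Complex.sin]; linear_combination -w * Complex.I_sq
  rw [h3, norm_div, norm_mul, Complex.norm_I, mul_one, Complex.norm_ofNat]
  have h4 := norm_sub_le (Complex.exp (-w * Complex.I) - 1 - -w * Complex.I)
    (Complex.exp (w * Complex.I) - 1 - w * Complex.I)
  simp only [norm_mul, norm_neg, Complex.norm_I, mul_one] at h1 h2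
  rw [norm_pow]
  linarith

/-- The phase is cubic to leading order: `dq/dw = c w² + O(w³)` with `c = α(1 − α²)/2`. -/
lemma rS_isBigO (α : ℝ) :
    (fun w : ℂ => rS α w - (α * (1 - α ^ 2) / 2 : ℝ) * w ^ 2) =O[𝓝 0] fun w : ℂ => w ^ 3 := by
  set k : ℂ → ℂ := fun w => α * (1 - α ^ 2) / (sS α w * (sS α w + Complex.cos w)) with hk
  have hS : DifferentiableAt ℂ (sS α) 0 := (hasDerivAt_sS (vS_zero_re α)).differentiableAt
  have hD : DifferentiableAt ℂ (fun w => sS α w * (sS α w + Complex.cos w)) 0 :=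
    hS.mul (hS.add Complex.differentiableAt_cos)
  have hD0 : sS α 0 * (sS α 0 + Complex.cos 0) ≠ 0 := by rw [sS_zero]; norm_num
  have hkd : DifferentiableAt ℂ k 0 := (differentiableAt_const _).div hD hD0
  have hk0 : k 0 = (α * (1 - α ^ 2) / 2 : ℝ) := by
    simp only [hk, sS_zero, Complex.cos_zero]; push_cast; norm_num
  have hB1 : (fun w : ℂ => k w - k 0) =O[𝓝 0] fun w : ℂ => w := by
    simpa using hkd.isBigO_sub
  have hB2 : k =O[𝓝 0] fun _ : ℂ => (1 : ℂ) := hkd.continuousAt.isBigO_one ℂ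
  have hB3 : (fun w : ℂ => Complex.sin w + w) =O[𝓝 0] fun w : ℂ => w := by
    have : DifferentiableAt ℂ Complex.sin 0 := Complex.differentiableAt_sin
    have := this.isBigO_sub
    simp only [Complex.sin_zero, sub_zero] at this
    exact this.add (isBigO_refl _ _)
  have h1 : (fun w : ℂ => k w * ((Complex.sin w - w) * (Complex.sin w + w)) + (k w - k 0) * w ^ 2)
      =O[𝓝 0] fun w : ℂ => w ^ 3 := by
    refine IsBigO.add ?_ ?_
    · refine (hB2.mul (sin_sub_isBigO.mul hB3)).congr_right fun w => by ring
    · refine (hB1.mul (isBigO_refl (fun w : ℂ => w ^ 2) _)).congr_right fun w => by ring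
  refine h1.congr' ?_ EventuallyEq.rfl
  have hev : ∀ᶠ w in 𝓝 (0 : ℂ), sS α w * (sS α w + Complex.cos w) ≠ 0 :=
    hD.continuousAt.eventually_ne hD0
  have hev2 : ∀ᶠ w in 𝓝 (0 : ℂ), 0 < (vS α w).re := by
    have : Continuous fun w : ℂ => (vS α w).re := by unfold vS; fun_prop
    exact this.continuousAt.eventually (lt_mem_nhds (vS_zero_re α))
  filter_upwards [hev, hev2] with w hw hw2
  have hS0 := sS_ne (α := α) w
  have h2 : rS α w = k w * Complex.sin w ^ 2 := by
    rw [rS, hk]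
    have h3 := right_ne_zero_of_mul hw
    field_simp
    have h4 := sS_sq hw2
    rw [vS] at h4
    have h5 := Complex.sin_sq_add_cos_sq w
    linear_combination (α : ℂ) * h4 - (α : ℂ) * h5
  rw [h2, hk0]; ring

/-- Local control of the phase near its degenerate critical point. -/
lemma local_phase {α : ℝ} (h0 : 0 < α) (h1 : α < 1) :
    ∃ δ C : ℝ, 0 < δ ∧ 0 ≤ C ∧ ∀ w : ℂ, ‖w‖ ≤ δ →
      ‖qS α w - (α * (1 - α ^ 2) / 2 : ℝ) * w ^ 3 / 3‖ ≤ C * ‖w‖ ^ 4 ∧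
      (α * (1 - α ^ 2) / 4) * w.re ^ 2 - (α * (1 - α ^ 2)) * w.im ^ 2 ≤ (rS α w).re := by
  set c : ℝ := α * (1 - α ^ 2) / 2 with hc
  have hcpos : 0 < c := by rw [hc]; have : 0 < 1 - α ^ 2 := by nlinarith
                           positivity
  obtain ⟨ρ, hρ, hstrip⟩ := exists_strip h0 h1
  obtain ⟨C, hC, hB⟩ := (rS_isBigO α).exists_pos
  obtain ⟨δ, hδ, hball⟩ := Metric.eventually_nhds_iff.1 hB.bound
  set δ' := min (δ / 2) (min ρ (c / (2 * C)))
  have hδ' : 0 < δ' := by positivity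
  have hr : ∀ w : ℂ, ‖w‖ ≤ δ' → ‖rS α w - (c : ℂ) * w ^ 2‖ ≤ C * ‖w‖ ^ 3 := by
    intro w hw
    have : dist w 0 < δ := by
      rw [dist_zero_right]
      have := min_le_left (δ / 2) (min ρ (c / (2 * C)))
      linarith
    simpa only [norm_pow] using hball this
  refine ⟨δ', C, hδ', hC.le, fun w hw => ⟨?_, ?_⟩⟩
  · have key := Convex.norm_image_sub_le_of_norm_hasDerivWithin_le (𝕜 := ℂ)
      (f := fun w => qS α w - (c : ℂ) * w ^ 3 / 3) (f' := fun w => rS α w - (c : ℂ) * w ^ 2)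
      (s := Metric.closedBall (0 : ℂ) ‖w‖) (x := 0) (y := w) (C := C * ‖w‖ ^ 3) ?_ ?_
      (convex_closedBall _ _) (by simp) (by simp)
    · have hq0 : qS α 0 = 0 := by simp [qS, lS, sS_zero]
      simp only [hq0] at key
      simp only [sub_zero, ne_eq, OfNat.ofNat_ne_zero, not_false_eq_true, zero_pow, mul_zero,
        zero_div] at key
      calc _ ≤ _ := key
        _ = _ := by ring
    · intro x hx
      have hx : ‖x‖ ≤ ‖w‖ := by simpa using hx
      have hv : 0 < (vS α x).re := hstrip x (by
        have h2 := Complex.abs_im_le_norm x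
        have h3 := min_le_right (δ / 2) (min ρ (c / (2 * C)))
        have h4 := min_le_left ρ (c / (2 * C))
        linarith)
      have := (hasDerivAt_qS hv).sub ((((hasDerivAt_id x).pow 3).const_mul (c : ℂ)).div_const 3)
      refine (this.congr_deriv ?_).hasDerivWithinAt
      simp; ring
    · intro x hx
      have hx : ‖x‖ ≤ ‖w‖ := by simpa using hx
      refine (hr x (hx.trans hw)).trans ?_
      gcongr
  · have h2 := (Complex.abs_re_le_norm _).trans (hr w hw)
    rw [Complex.sub_re, Complex.re_ofReal_mul] at h2
    have h3 : (w ^ 2).re = w.re ^ 2 - w.im ^ 2 := by rw [sq, Complex.mul_re]; ring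
    have h4 : ‖w‖ ^ 2 = w.re ^ 2 + w.im ^ 2 := by
      rw [← Complex.normSq_eq_norm_sq, Complex.normSq_apply]; ring
    have h5 : C * ‖w‖ ≤ c / 2 := by
      have h3 := min_le_right (δ / 2) (min ρ (c / (2 * C)))
      have h4 := min_le_right ρ (c / (2 * C))
      have : ‖w‖ ≤ c / (2 * C) := by linarith
      calc C * ‖w‖ ≤ C * (c / (2 * C)) := by gcongr
        _ = c / 2 := by field_simp
    have h6 : C * ‖w‖ ^ 3 ≤ c / 2 * (w.re ^ 2 + w.im ^ 2) := by
      calc C * ‖w‖ ^ 3 = (C * ‖w‖) * ‖w‖ ^ 2 := by ring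
        _ ≤ c / 2 * ‖w‖ ^ 2 := by gcongr
        _ = _ := by rw [h4]
    rw [h3] at h2
    have h7 := (abs_le.1 h2).1
    have e1 : α * (1 - α ^ 2) / 4 = c / 2 := by rw [hc]; ring
    have e2 : α * (1 - α ^ 2) = 2 * c := by rw [hc]; ring
    rw [e1, e2]
    nlinarith [sq_nonneg w.im]

lemma continuousOn_rS {α : ℝ} : ContinuousOn (rS α) {w | 0 < (vS α w).re} := by
  have : ContinuousOn (sS α) {w | 0 < (vS α w).re} :=
    fun w hw => (hasDerivAt_sS hw).continuousAt.continuousWithinAt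
  unfold rS
  exact continuousOn_const.sub ((continuousOn_const.mul Complex.continuous_cos.continuousOn).div
    this fun w _ => sS_ne w)

lemma isOpen_vS (α : ℝ) : IsOpen {w : ℂ | 0 < (vS α w).re} := by
  have : Continuous fun w : ℂ => (vS α w).re := by unfold vS; fun_prop
  exact isOpen_lt continuous_const this

/-- Away from the degenerate critical point the real part of `dq/dw` is bounded below, also
slightly above and below the real axis. -/
lemma far_phase {α : ℝ} (h0 : 0 < α) (h1 : α < 1) {δ : ℝ} (hδ : 0 < δ) :
    ∃ ρ κ : ℝ, 0 < ρ ∧ 0 < κ ∧ ∀ s v : ℝ, δ ≤ |s| → |s| ≤ Real.pi → |v| ≤ ρ →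
      κ ≤ (rS α (s + v * Complex.I)).re := by
  set K : Set ℝ := {s | δ ≤ |s| ∧ |s| ≤ Real.pi}
  have hKc : IsCompact K := by
    refine (isCompact_Icc (a := -Real.pi) (b := Real.pi)).of_isClosed_subset ?_ ?_
    · exact (isClosed_le continuous_const continuous_abs).inter
        (isClosed_le continuous_abs continuous_const)
    · rintro s ⟨_, hs⟩
      exact abs_le.1 hs
  have hreal : ∀ s : ℝ, 0 < (vS α s).re := by
    obtain ⟨ρ, hρ, hs⟩ := exists_strip h0 h1
    intro s; apply hs; simpa using hρ.le
  have hpos : ∀ s ∈ K, 0 < (rS α (s : ℂ)).re := by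
    rintro s ⟨hs1, hs2⟩
    apply rS_real_pos h0 h1
    refine lt_of_le_of_ne (Real.cos_le_one s) fun h => ?_
    have h2 := (Real.cos_eq_one_iff_of_lt_of_lt (x := s)
      (by have := abs_le.1 hs2; linarith [Real.pi_pos])
      (by have := abs_le.1 hs2; linarith [Real.pi_pos])).1 h
    rw [h2] at hs1; simp at hs1; linarith
  have hcont : ContinuousOn (fun s : ℝ => (rS α (s : ℂ)).re) K := by
    refine Complex.continuous_re.comp_continuousOn
      (continuousOn_rS.comp Complex.continuous_ofReal.continuousOn fun s _ => hreal s)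
  obtain ⟨κ, hκ, hκ2⟩ : ∃ κ : ℝ, 0 < κ ∧ ∀ s ∈ K, κ < (rS α (s : ℂ)).re := by
    rcases K.eq_empty_or_nonempty with hE | hN
    · exact ⟨1, one_pos, fun s hs => by rw [hE] at hs; exact hs.elim⟩
    · obtain ⟨s0, hs0, hmin⟩ := hKc.exists_isMinOn hN hcont
      refine ⟨(rS α (s0 : ℂ)).re / 2, half_pos (hpos s0 hs0), fun s hs => ?_⟩
      have h2 : (rS α (s0 : ℂ)).re ≤ (rS α (s : ℂ)).re := hmin hs
      have := hpos s0 hs0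
      linarith
  have hopen : IsOpen ({w : ℂ | 0 < (vS α w).re} ∩ rS α ⁻¹' {z | κ < z.re}) :=
    continuousOn_rS.isOpen_inter_preimage (isOpen_vS α)
      (isOpen_lt continuous_const Complex.continuous_re)
  obtain ⟨ρ, hρ, hsub⟩ := (hKc.image Complex.continuous_ofReal).exists_thickening_subset_open
    hopen (by
      rintro _ ⟨s, hs, rfl⟩
      exact ⟨hreal s, hκ2 s hs⟩)
  refine ⟨ρ / 2, κ, by positivity, hκ, fun s v hs1 hs2 hv => ?_⟩
  have : (s + v * Complex.I : ℂ) ∈ Metric.thickening ρ (Complex.ofReal '' K) := by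
    rw [Metric.mem_thickening_iff]
    refine ⟨s, ⟨s, ⟨hs1, hs2⟩, rfl⟩, ?_⟩
    rw [dist_eq_norm]; simp; linarith
  exact (hsub this).2.le

/-- Just above the real axis the imaginary part of the phase grows like `η s²`, up to `O(η³)`;
this turns the oscillatory integral into an absolutely convergent one. -/
lemma im_phase {α : ℝ} (h0 : 0 < α) (h1 : α < 1) :
    ∃ ρ κ C : ℝ, 0 < ρ ∧ 0 < κ ∧ 0 ≤ C ∧ ∀ s η : ℝ, |s| ≤ Real.pi → 0 ≤ η → η ≤ ρ →
      κ * η * s ^ 2 - C * η ^ 3 ≤ (qS α (s + η * Complex.I)).im := by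
  obtain ⟨ρ0, hρ0, hstrip⟩ := exists_strip h0 h1
  obtain ⟨δ, C, hδ, hC, hloc⟩ := local_phase h0 h1
  obtain ⟨ρ1, κ1, hρ1, hκ1, hfar⟩ := far_phase h0 h1 (half_pos hδ)
  have hc : 0 < α * (1 - α ^ 2) := by
    have : 0 < 1 - α ^ 2 := by nlinarith
    positivity
  set C' := α * (1 - α ^ 2)
  set κ := min (C' / 4) (κ1 / Real.pi ^ 2)
  have hκ : 0 < κ := by have := Real.pi_pos; positivity
  refine ⟨min ρ0 (min ρ1 (δ / 2)), κ, C', by positivity, hκ, hc.le, fun s η hs h0η hη => ?_⟩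
  have hη0 : η ≤ ρ0 := hη.trans (min_le_left _ _)
  have hη1 : η ≤ ρ1 := hη.trans ((min_le_right _ _).trans (min_le_left _ _))
  have hη2 : η ≤ δ / 2 := hη.trans ((min_le_right _ _).trans (min_le_right _ _))
  have hr : ∀ v : ℝ, 0 ≤ v → v ≤ η → κ * s ^ 2 - C' * η ^ 2 ≤ (rS α (s + v * Complex.I)).re := by
    intro v hv0 hv
    rcases le_or_gt |s| (δ / 2) with h | h
    · have hn : ‖(s + v * Complex.I : ℂ)‖ ≤ δ := by
        refine (norm_add_le _ _).trans ?_
        simp [abs_of_nonneg hv0]; linarith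
      have := (hloc _ hn).2
      simp at this
      have h3 : κ * s ^ 2 ≤ C' / 4 * s ^ 2 :=
        mul_le_mul_of_nonneg_right (min_le_left _ _) (sq_nonneg s)
      have h4 : C' * v ^ 2 ≤ C' * η ^ 2 := by gcongr
      linarith
    · have := hfar s v h.le hs (by rw [abs_of_nonneg hv0]; linarith)
      refine le_trans ?_ this
      have h5 : s ^ 2 ≤ Real.pi ^ 2 := sq_le_sq' (by linarith [abs_le.1 hs]) (abs_le.1 hs).2
      have h3 : κ * s ^ 2 ≤ κ1 / Real.pi ^ 2 * Real.pi ^ 2 :=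
        mul_le_mul (min_le_right _ _) h5 (sq_nonneg s) (by positivity)
      rw [div_mul_cancel₀ _ (by positivity)] at h3
      have : 0 ≤ C' * η ^ 2 := by positivity
      linarith
  have hder : ∀ v ∈ Set.Icc 0 η, HasDerivAt (fun v : ℝ => (qS α (s + v * Complex.I)).im)
      (rS α (s + v * Complex.I)).re v := by
    intro v hv
    have hvs : 0 < (vS α (s + v * Complex.I)).re := hstrip _ (by
      simp [abs_of_nonneg hv.1]; linarith [hv.2])
    have hin : HasDerivAt (fun v : ℝ => (s + v * Complex.I : ℂ)) Complex.I v := by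
      simpa using ((Complex.ofRealCLM.hasDerivAt (x := v)).mul_const Complex.I).const_add (s : ℂ)
    have h2 := (hasDerivAt_qS hvs).comp v hin
    have h3 := (Complex.imCLM.hasFDerivAt).comp_hasDerivAt v h2
    refine h3.congr_deriv ?_
    simp
  have key := Convex.mul_sub_le_image_sub_of_le_deriv (convex_Icc 0 η)
    (f := fun v : ℝ => (qS α (s + v * Complex.I)).im)
    (fun v hv => (hder v hv).continuousAt.continuousWithinAt)
    (fun v hv => (hder v (interior_subset hv)).differentiableAt.differentiableWithinAt)
    (C := κ * s ^ 2 - C' * η ^ 2)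
    (fun v hv => by
      have hv := interior_subset hv
      rw [(hder v hv).deriv]
      exact hr v hv.1 hv.2) 0 ⟨le_rfl, h0η⟩ η ⟨h0η, le_rfl⟩ h0η
  have h9 := qS_real h0 h1 s
  simp only [Complex.ofReal_zero, zero_mul, add_zero, h9, sub_zero] at key
  linarith

/-! ### The Airy integral on a shifted contour -/

lemma norm_airy (x u v : ℝ) :
    ‖Complex.exp (Complex.I * (((u : ℂ) + v * Complex.I) ^ 3 / 3 + ((u : ℂ) + v * Complex.I) * x))‖
      = Real.exp (-(u ^ 2 * v - v ^ 3 / 3 + v * x)) := by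
  rw [Complex.norm_exp]
  congr 1
  have : Complex.I * (((u : ℂ) + v * Complex.I) ^ 3 / 3 + ((u : ℂ) + v * Complex.I) * x)
      = ((-(u ^ 2 * v - v ^ 3 / 3 + v * x) : ℝ) : ℂ)
        + ((u ^ 3 / 3 - u * v ^ 2 + u * x : ℝ) : ℂ) * Complex.I := by
    push_cast
    linear_combination ((u : ℂ) ^ 2 * v + u * v ^ 2 * Complex.I + (v : ℂ) ^ 3 * (Complex.I ^ 2 - 1) / 3
      + v * x) * Complex.I_sq
  rw [this]
  simp only [Complex.add_re, Complex.ofReal_re, Complex.re_ofReal_mul, Complex.I_re, mul_zero,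
    add_zero]

lemma integrable_airy (x : ℝ) : Integrable fun u : ℝ =>
    Complex.exp (Complex.I * (((u : ℂ) + Complex.I) ^ 3 / 3 + ((u : ℂ) + Complex.I) * x)) := by
  have h := (integrable_exp_neg_mul_sq one_pos).const_mul (Real.exp (1 / 3 - x))
  refine h.mono' (Continuous.aestronglyMeasurable (by fun_prop)) (ae_of_all _ fun u => ?_)
  have := norm_airy x u 1
  simp only [Complex.ofReal_one, one_mul] at this
  rw [this, ← Real.exp_add]
  apply le_of_eq; congr 1; ring

lemma tendsto_vertical (x : ℝ) (σ : ℝ) (hσ : σ = 1 ∨ σ = -1) :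
    Tendsto (fun R : ℝ => ∫ v in (0 : ℝ)..1, Complex.exp (Complex.I *
      ((((σ * R : ℝ) : ℂ) + v * Complex.I) ^ 3 / 3 + (((σ * R : ℝ) : ℂ) + v * Complex.I) * x)))
      atTop (𝓝 0) := by
  have hσ2 : σ ^ 2 = 1 := by rcases hσ with h | h <;> rw [h] <;> norm_num
  have h := intervalIntegral.tendsto_integral_filter_of_dominated_convergence (μ := volume)
    (l := (atTop : Filter ℝ)) (a := (0 : ℝ)) (b := 1) (f := fun _ => (0 : ℂ))
    (F := fun R v => Complex.exp (Complex.I *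
      ((((σ * R : ℝ) : ℂ) + v * Complex.I) ^ 3 / 3 + (((σ * R : ℝ) : ℂ) + v * Complex.I) * x)))
    (fun _ => Real.exp (1 / 3 + |x|)) ?_ ?_ ?_ ?_
  · simpa using h
  · exact Eventually.of_forall fun R => Continuous.aestronglyMeasurable (by fun_prop)
  · refine Eventually.of_forall fun R => ae_of_all _ fun v hv => ?_
    rw [Set.uIoc_of_le zero_le_one] at hv
    rw [norm_airy]
    apply Real.exp_le_exp.2
    have h1 : 0 ≤ (σ * R) ^ 2 * v := mul_nonneg (sq_nonneg _) hv.1.le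
    have h2 : v ^ 3 ≤ 1 := pow_le_one₀ hv.1.le hv.2
    have h3 : |v * x| ≤ |x| := by
      rw [abs_mul, abs_of_pos hv.1]
      exact mul_le_of_le_one_left (abs_nonneg x) hv.2
    have h4 := neg_abs_le (v * x)
    linarith
  · exact intervalIntegrable_const
  · refine ae_of_all _ fun v hv => ?_
    rw [Set.uIoc_of_le zero_le_one] at hv
    rw [tendsto_zero_iff_norm_tendsto_zero]
    simp_rw [norm_airy]
    apply Real.tendsto_exp_neg_atTop_nhds_zero.comp
    simp_rw [mul_pow, hσ2, one_mul, sub_add]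
    exact tendsto_atTop_add_const_right _ _ ((tendsto_pow_atTop two_ne_zero).atTop_mul_const hv.1)

/-- Moving the contour of the Airy integral to `Im = 1`, where it converges absolutely. -/
lemma Ai_shift (x : ℝ) : Ai x = ((1 / (2 * Real.pi) : ℝ) : ℂ) *
    ∫ u : ℝ, Complex.exp (Complex.I * (((u : ℂ) + Complex.I) ^ 3 / 3 + ((u : ℂ) + Complex.I) * x)) := by
  rw [Ai]
  congr 1
  apply Tendsto.limUnder_eq
  set f : ℂ → ℂ := fun t => Complex.exp (Complex.I * (t ^ 3 / 3 + t * x)) with hf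
  have h1 : Tendsto (fun R : ℝ => ∫ u in (-R)..R, f (u + Complex.I)) atTop
      (𝓝 (∫ u : ℝ, f (u + Complex.I))) :=
    MeasureTheory.intervalIntegral_tendsto_integral (integrable_airy x) tendsto_neg_atTop_atBot tendsto_id
  have h2 := tendsto_vertical x 1 (Or.inl rfl)
  have h3 := tendsto_vertical x (-1) (Or.inr rfl)
  have h4 := (h1.sub (h2.const_mul Complex.I)).add (h3.const_mul Complex.I)
  simp only [mul_zero, sub_zero, add_zero] at h4
  refine h4.congr fun R => ?_
  have key := Complex.integral_boundary_rect_eq_zero_of_differentiableOn f (-R : ℝ)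
    ((R : ℝ) + Complex.I) (by
      have : Differentiable ℂ f := by rw [hf]; fun_prop
      exact this.differentiableOn)
  simp only [Complex.ofReal_re, Complex.ofReal_im, Complex.add_re, Complex.add_im, Complex.I_re,
    Complex.I_im, add_zero, zero_add, Complex.ofReal_zero, zero_mul, Complex.ofReal_one,
    one_mul, smul_eq_mul] at key
  simp only [hf, one_mul, neg_one_mul] at key ⊢
  linear_combination -key

/-- The Airy integral in the scaling of the walk: `w = s + iβ/m`, `c β³ = 1`. -/
lemma Ai_scaled {c β m : ℝ} (hβ : 0 < β) (hcβ : c * β ^ 3 = 1) (hm : 0 < m) (D : ℝ) :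
    ∫ s : ℝ, Complex.exp (Complex.I * ((m : ℂ) ^ 3 * ((c : ℂ) * (s + (β / m : ℝ) * Complex.I) ^ 3 / 3)
      + D * (s + (β / m : ℝ) * Complex.I)))
      = 2 * Real.pi * β * ((m⁻¹ : ℝ) : ℂ) * Ai (β * m⁻¹ * D) := by
  rw [Ai_shift]
  have h := MeasureTheory.Measure.integral_comp_mul_left (fun u : ℝ =>
    Complex.exp (Complex.I * (((u : ℂ) + Complex.I) ^ 3 / 3 + ((u : ℂ) + Complex.I) *
      ((β * m⁻¹ * D : ℝ) : ℂ)))) (m / β)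
  have hm' : (m : ℂ) ≠ 0 := by exact_mod_cast hm.ne'
  have hβ' : (β : ℂ) ≠ 0 := by exact_mod_cast hβ.ne'
  have hc' : (c : ℂ) * (β : ℂ) ^ 3 = 1 := by exact_mod_cast hcβ
  have e : ∀ s : ℝ, Complex.I * ((m : ℂ) ^ 3 * ((c : ℂ) * (s + (β / m : ℝ) * Complex.I) ^ 3 / 3)
      + D * (s + (β / m : ℝ) * Complex.I)) = Complex.I * (((((m / β * s : ℝ)) : ℂ) + Complex.I) ^ 3 / 3
        + ((((m / β * s : ℝ)) : ℂ) + Complex.I) * ((β * m⁻¹ * D : ℝ) : ℂ)) := by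
    intro s
    have hw : ((s : ℂ) + (β / m : ℝ) * Complex.I)
        = (β / m : ℂ) * ((((m / β * s : ℝ)) : ℂ) + Complex.I) := by
      push_cast; field_simp
    rw [hw]
    generalize (((m / β * s : ℝ)) : ℂ) + Complex.I = z
    push_cast
    field_simp
    linear_combination z ^ 3 * m * hc'
  simp_rw [e]
  rw [h, abs_of_pos (by positivity), Complex.real_smul]
  have hpi : (Real.pi : ℂ) ≠ 0 := by exact_mod_cast Real.pi_ne_zero
  push_cast
  field_simp

/-! ### Comparison with the cubic model -/

lemma norm_exp_sub_exp_le {x y : ℂ} {M : ℝ} (hx : x.re ≤ M) (hy : y.re ≤ M) :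
    ‖Complex.exp x - Complex.exp y‖ ≤ Real.exp M * ‖x - y‖ := by
  refine Convex.norm_image_sub_le_of_norm_hasDerivWithin_le (𝕜 := ℂ) (s := {z : ℂ | z.re ≤ M})
    (f' := Complex.exp) (fun z _ => (Complex.hasDerivAt_exp z).hasDerivWithinAt) (fun z hz => ?_)
    (convex_halfSpace_re_le M) hy hx
  rw [Complex.norm_exp]
  exact Real.exp_le_exp.2 hz

/-- A polynomial weight is absorbed by half of the Gaussian. -/
lemma poly_gauss {κ β : ℝ} (hκ : 0 < κ) (hβ : 0 < β) :
    ∃ C : ℝ, 0 ≤ C ∧ ∀ u : ℝ, 0 ≤ u →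
      ((u + β) + (u + β) ^ 4) * Real.exp (-(κ * u ^ 2)) ≤ C * Real.exp (-(κ / 2 * u ^ 2)) := by
  refine ⟨25 * Real.exp (β + 1 / (2 * κ)), by positivity, fun u hu => ?_⟩
  have h1 : u + β ≤ Real.exp (u + β) := by linarith [Real.add_one_le_exp (u + β)]
  have h2 : (u + β) ^ 4 ≤ 24 * Real.exp (u + β) := by
    have := Real.pow_div_factorial_le_exp (u + β) (by positivity) 4
    rw [div_le_iff₀ (by positivity)] at this
    norm_num [Nat.factorial] at this
    linarith
  have h3 : u + β ≤ β + 1 / (2 * κ) + κ / 2 * u ^ 2 := by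
    have : u * (2 * κ) ≤ 1 + κ ^ 2 * u ^ 2 := by nlinarith [sq_nonneg (κ * u - 1)]
    have h4 : u ≤ (1 + κ ^ 2 * u ^ 2) / (2 * κ) := by rwa [le_div_iff₀ (by positivity)]
    have h5 : (1 + κ ^ 2 * u ^ 2) / (2 * κ) = 1 / (2 * κ) + κ / 2 * u ^ 2 := by field_simp
    linarith
  calc ((u + β) + (u + β) ^ 4) * Real.exp (-(κ * u ^ 2))
      ≤ (25 * Real.exp (β + 1 / (2 * κ) + κ / 2 * u ^ 2)) * Real.exp (-(κ * u ^ 2)) := by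
        gcongr
        have := Real.exp_le_exp.2 h3
        linarith
    _ = 25 * Real.exp (β + 1 / (2 * κ)) * Real.exp (-(κ / 2 * u ^ 2)) := by
        rw [mul_assoc, mul_assoc, ← Real.exp_add, ← Real.exp_add]
        congr 2; ring

/-- On the line `Im w = β/m` the integrand and its Airy model differ by `O(1/m)` times a
Gaussian of width `1/m`; outside the period the model itself is that small. -/
lemma pointwise_bound {α : ℝ} (h0 : 0 < α) (h1 : α < 1) {β : ℝ} (hβ : 0 < β) (G : ℂ → ℂ)
    {ρ B : ℝ} (hρ : 0 < ρ) (hB : 0 ≤ B)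
    (hG : ∀ w : ℂ, |w.re| ≤ Real.pi → 0 ≤ w.im → w.im ≤ ρ → ‖G w - G 0‖ ≤ B * ‖w‖) :
    ∃ C κ m0 : ℝ, 0 ≤ C ∧ 0 < κ ∧ 0 < m0 ∧ ∀ m : ℝ, m0 ≤ m → ∀ s : ℝ,
      (|s| ≤ Real.pi →
        ‖G (s + (β / m : ℝ) * Complex.I) *
            Complex.exp (Complex.I * ((m : ℂ) ^ 3 * qS α (s + (β / m : ℝ) * Complex.I)))
          - G 0 * Complex.exp (Complex.I * ((m : ℂ) ^ 3 *
            (((α * (1 - α ^ 2) / 2 : ℝ) : ℂ) * (s + (β / m : ℝ) * Complex.I) ^ 3 / 3)))‖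
          ≤ C / m * Real.exp (-(κ * m ^ 2) * s ^ 2)) ∧
      (Real.pi < |s| →
        ‖G 0 * Complex.exp (Complex.I * ((m : ℂ) ^ 3 *
            (((α * (1 - α ^ 2) / 2 : ℝ) : ℂ) * (s + (β / m : ℝ) * Complex.I) ^ 3 / 3)))‖
          ≤ C / m * Real.exp (-(κ * m ^ 2) * s ^ 2)) := by
  set c : ℝ := α * (1 - α ^ 2) / 2 with hc
  have hcpos : 0 < c := by rw [hc]; have : 0 < 1 - α ^ 2 := by nlinarith
                           positivity
  obtain ⟨ρ1, κ1, C1, hρ1, hκ1, hC1, him⟩ := im_phase h0 h1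
  obtain ⟨δ, C2, hδ, hC2, hloc⟩ := local_phase h0 h1
  set κ := min (κ1 * β) (c * β)
  have hκ : 0 < κ := by positivity
  set K := C1 * β ^ 3 + c * β ^ 3
  obtain ⟨C3, hC3, hpg⟩ := poly_gauss hκ hβ
  set g := ‖G 0‖
  have hg : 0 ≤ g := norm_nonneg _
  set C4 := B + 2 * g / δ + g * C2 + g
  have hC4 : 0 ≤ C4 := by positivity
  refine ⟨C4 * Real.exp K * C3, κ / 2, max (β / ρ) (β / ρ1) + 1, by positivity, by positivity,
    by positivity, fun m hm s => ?_⟩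
  have hmpos : 0 < m := lt_of_lt_of_le (by positivity) hm
  have hη : 0 < β / m := by positivity
  have hηρ : β / m ≤ ρ := by
    rw [div_le_iff₀ hmpos, mul_comm, ← div_le_iff₀ hρ]; linarith [le_max_left (β / ρ) (β / ρ1)]
  have hηρ1 : β / m ≤ ρ1 := by
    rw [div_le_iff₀ hmpos, mul_comm, ← div_le_iff₀ hρ1]; linarith [le_max_right (β / ρ) (β / ρ1)]
  set w : ℂ := s + (β / m : ℝ) * Complex.I with hw
  have hwre : w.re = s := by simp [hw]
  have hwim : w.im = β / m := by simp [hw]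
  set u := m * |s| with hu
  have hu0 : 0 ≤ u := by positivity
  have hus : u ^ 2 = m ^ 2 * s ^ 2 := by rw [hu, mul_pow, sq_abs]
  have hwn : ‖w‖ ≤ (u + β) / m := by
    rw [add_div, hu, mul_div_cancel_left₀ _ hmpos.ne']
    refine (norm_add_le _ _).trans ?_
    rw [norm_mul, Complex.norm_real, Complex.norm_real, Complex.norm_I, mul_one, Real.norm_eq_abs,
      Real.norm_of_nonneg hη.le]
  set M := K - κ * u ^ 2 with hM
  -- Both exponents have real part at most `M`, the exponent of a Gaussian in `u = m|s|`.
  have hE2 : (Complex.I * ((m : ℂ) ^ 3 * ((c : ℂ) * w ^ 3 / 3))).re ≤ M := by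
    have e1 : Complex.I * ((m : ℂ) ^ 3 * ((c : ℂ) * w ^ 3 / 3))
        = ((m ^ 3 * c / 3 : ℝ) : ℂ) * (Complex.I * w ^ 3) := by push_cast; ring
    have e2 : (Complex.I * w ^ 3).re = -(3 * s ^ 2 * (β / m) - (β / m) ^ 3) := by
      rw [Complex.I_mul_re, ← hwre, ← hwim]
      simp only [pow_succ, pow_zero, one_mul, Complex.mul_im, Complex.mul_re]; ring
    rw [e1, Complex.re_ofReal_mul, e2]
    have e3 : m ^ 3 * c / 3 * -(3 * s ^ 2 * (β / m) - (β / m) ^ 3)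
        = c * β ^ 3 / 3 - c * β * u ^ 2 := by
      rw [hus]; field_simp; ring
    rw [e3, hM]
    have : κ * u ^ 2 ≤ c * β * u ^ 2 :=
      mul_le_mul_of_nonneg_right (min_le_right _ _) (sq_nonneg _)
    have : 0 ≤ C1 * β ^ 3 := by positivity
    have : 0 ≤ c * β ^ 3 := by positivity
    simp only [K]
    linarith
  have hE1 : |s| ≤ Real.pi → (Complex.I * ((m : ℂ) ^ 3 * qS α w)).re ≤ M := by
    intro hs
    have h2 := him s (β / m) hs hη.le hηρ1
    rw [← hw] at h2
    have e1 : Complex.I * ((m : ℂ) ^ 3 * qS α w) = ((m ^ 3 : ℝ) : ℂ) * (Complex.I * qS α w) := by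
      push_cast; ring
    rw [e1, Complex.re_ofReal_mul, Complex.I_mul_re]
    have h3 := mul_le_mul_of_nonneg_left h2 (pow_pos hmpos 3).le
    have e3 : m ^ 3 * (κ1 * (β / m) * s ^ 2 - C1 * (β / m) ^ 3)
        = κ1 * β * u ^ 2 - C1 * β ^ 3 := by
      rw [hus]; field_simp
    rw [e3] at h3
    have : κ * u ^ 2 ≤ κ1 * β * u ^ 2 :=
      mul_le_mul_of_nonneg_right (min_le_left _ _) (sq_nonneg _)
    have : 0 ≤ c * β ^ 3 := by positivity
    rw [hM]
    simp only [K]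
    linarith
  have hN2 : ‖Complex.exp (Complex.I * ((m : ℂ) ^ 3 * ((c : ℂ) * w ^ 3 / 3)))‖ ≤ Real.exp M := by
    rw [Complex.norm_exp]; exact Real.exp_le_exp.2 hE2
  -- All three error terms carry at most the factor `((u + β) + (u + β)⁴)/m`, which `hpg` absorbs.
  have hfin : ∀ X : ℝ, X ≤ C4 * (((u + β) + (u + β) ^ 4) / m) * Real.exp M →
      X ≤ C4 * Real.exp K * C3 / m * Real.exp (-(κ / 2 * m ^ 2) * s ^ 2) := by
    intro X hX
    refine hX.trans ?_
    have e1 : Real.exp M = Real.exp K * Real.exp (-(κ * u ^ 2)) := by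
      rw [← Real.exp_add, hM, sub_eq_add_neg]
    have e2 : -(κ / 2 * m ^ 2) * s ^ 2 = -(κ / 2 * u ^ 2) := by rw [hus]; ring
    rw [e1, e2]
    calc C4 * (((u + β) + (u + β) ^ 4) / m) * (Real.exp K * Real.exp (-(κ * u ^ 2)))
        = C4 * Real.exp K / m * (((u + β) + (u + β) ^ 4) * Real.exp (-(κ * u ^ 2))) := by ring
      _ ≤ C4 * Real.exp K / m * (C3 * Real.exp (-(κ / 2 * u ^ 2))) := by
          exact mul_le_mul_of_nonneg_left (hpg u hu0) (by positivity)
      _ = _ := by ring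
  have hZ1 : (u + β) / m ≤ ((u + β) + (u + β) ^ 4) / m := by
    have : 0 ≤ (u + β) ^ 4 := by positivity
    exact div_le_div_of_nonneg_right (by linarith) hmpos.le
  constructor
  · intro hs
    have hN1 : ‖Complex.exp (Complex.I * ((m : ℂ) ^ 3 * qS α w))‖ ≤ Real.exp M := by
      rw [Complex.norm_exp]; exact Real.exp_le_exp.2 (hE1 hs)
    have hGw := hG w (by rwa [hwre]) (by rw [hwim]; exact hη.le) (by rwa [hwim])
    apply hfin
    set X := Complex.exp (Complex.I * ((m : ℂ) ^ 3 * qS α w)) with hX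
    set Y := Complex.exp (Complex.I * ((m : ℂ) ^ 3 * ((c : ℂ) * w ^ 3 / 3))) with hY
    have hsplit : G w * X - G 0 * Y = (G w - G 0) * X + G 0 * (X - Y) := by ring
    have hXY : ‖X - Y‖ ≤ (2 / δ + C2) * (((u + β) + (u + β) ^ 4) / m) * Real.exp M := by
      rcases le_or_gt ‖w‖ δ with hn | hn
      · have h2 := norm_exp_sub_exp_le (hE1 hs) hE2
        have h3 := (hloc w hn).1
        rw [← hc] at h3
        have e1 : Complex.I * ((m : ℂ) ^ 3 * qS α w) -
            Complex.I * ((m : ℂ) ^ 3 * ((c : ℂ) * w ^ 3 / 3))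
            = Complex.I * ((m : ℂ) ^ 3 * (qS α w - (c : ℂ) * w ^ 3 / 3)) := by ring
        rw [e1, norm_mul, Complex.norm_I, one_mul, norm_mul, norm_pow, Complex.norm_real,
          Real.norm_of_nonneg hmpos.le] at h2
        have h4 : m ^ 3 * ‖qS α w - (c : ℂ) * w ^ 3 / 3‖ ≤ C2 * ((u + β) ^ 4 / m) := by
          calc m ^ 3 * ‖qS α w - (c : ℂ) * w ^ 3 / 3‖ ≤ m ^ 3 * (C2 * ((u + β) / m) ^ 4) := by
                gcongr; refine h3.trans ?_; gcongr
            _ = _ := by field_simp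
        calc ‖X - Y‖ ≤ Real.exp M * (C2 * ((u + β) ^ 4 / m)) := by
              refine h2.trans ?_; gcongr
          _ ≤ Real.exp M * ((2 / δ + C2) * (((u + β) + (u + β) ^ 4) / m)) := by
              gcongr
              · have : 0 ≤ 2 / δ := by positivity
                linarith
              · linarith
          _ = _ := by ring
      · have h2 : ‖X - Y‖ ≤ 2 * Real.exp M := by
          refine (norm_sub_le _ _).trans ?_; linarith
        have h3 : 1 ≤ 1 / δ * ((u + β) / m) := by
          rw [one_div, inv_mul_eq_div, le_div_iff₀ hδ]; linarith
        calc ‖X - Y‖ ≤ 2 * Real.exp M := h2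
          _ ≤ 2 * Real.exp M * (1 / δ * ((u + β) / m)) :=
              le_mul_of_one_le_right (by positivity) h3
          _ = (2 / δ) * ((u + β) / m) * Real.exp M := by ring
          _ ≤ (2 / δ + C2) * (((u + β) + (u + β) ^ 4) / m) * Real.exp M := by
              have : 2 / δ ≤ 2 / δ + C2 := by linarith
              gcongr
    set Z := ((u + β) + (u + β) ^ 4) / m with hZ
    have hZ0 : 0 ≤ Z := by positivity
    have hwZ : ‖w‖ ≤ Z := by
      exact hwn.trans hZ1
    rw [hsplit]
    calc ‖(G w - G 0) * X + G 0 * (X - Y)‖ ≤ ‖G w - G 0‖ * ‖X‖ + g * ‖X - Y‖ := by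
          refine (norm_add_le _ _).trans ?_
          rw [norm_mul, norm_mul]
      _ ≤ (B * Z) * Real.exp M + g * ((2 / δ + C2) * Z * Real.exp M) := by
          gcongr
          refine hGw.trans ?_
          gcongr
      _ = (B + 2 * g / δ + g * C2) * (Z * Real.exp M) := by ring
      _ ≤ C4 * (Z * Real.exp M) := by
          gcongr
          simp only [C4]; linarith
      _ = _ := by ring
  · intro hs
    apply hfin
    have h3 : 1 ≤ ((u + β) + (u + β) ^ 4) / m := by
      rw [le_div_iff₀ hmpos, one_mul]
      have h4 : 0 ≤ (u + β) ^ 4 := by positivity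
      have h5 : m * 1 ≤ u := by
        rw [hu]; gcongr; linarith [Real.pi_gt_three]
      linarith
    rw [norm_mul]
    calc g * ‖_‖ ≤ g * Real.exp M := by gcongr
      _ ≤ C4 * Real.exp M := by
          gcongr
          have : 0 ≤ B + 2 * g / δ + g * C2 := by positivity
          simp only [C4]; linarith
      _ ≤ C4 * Real.exp M * (((u + β) + (u + β) ^ 4) / m) :=
          le_mul_of_one_le_right (by positivity) h3
      _ = _ := by ring

/-- The uniform Airy asymptotics of the oscillatory integral with phase `m³ q`. -/
lemma integral_asymp {α : ℝ} (h0 : 0 < α) (h1 : α < 1) {β : ℝ} (hβ : 0 < β)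
    (hcβ : (α * (1 - α ^ 2) / 2) * β ^ 3 = 1) (G : ℂ → ℂ)
    {ρ B : ℝ} (hρ : 0 < ρ) (hB : 0 ≤ B)
    (hG : ∀ w : ℂ, |w.re| ≤ Real.pi → 0 ≤ w.im → w.im ≤ ρ → ‖G w - G 0‖ ≤ B * ‖w‖)
    (hGc : ∀ w : ℂ, 0 ≤ w.im → w.im ≤ ρ → ContinuousAt G w) (L : ℝ) :
    ∃ C m0 : ℝ, 0 < m0 ∧ ∀ m : ℝ, m0 ≤ m → ∀ D : ℝ, |D| ≤ L * m →
      ‖(∫ s in (-Real.pi)..Real.pi, G (s + (β / m : ℝ) * Complex.I) *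
            Complex.exp (Complex.I * ((m : ℂ) ^ 3 * qS α (s + (β / m : ℝ) * Complex.I)))
            * Complex.exp (Complex.I * (D * (s + (β / m : ℝ) * Complex.I))))
        - G 0 * (2 * Real.pi * β * ((m⁻¹ : ℝ) : ℂ) * Ai (β * m⁻¹ * D))‖ ≤ C / m ^ 2 := by
  obtain ⟨C, κ, m0, hC, hκ, hm0, hpt⟩ := pointwise_bound h0 h1 hβ G hρ hB hG
  obtain ⟨ρ0, hρ0, hstrip⟩ := exists_strip h0 h1
  refine ⟨Real.exp (L * β) * C * Real.sqrt (Real.pi / κ), max m0 (max (β / ρ) (β / ρ0)),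
    by positivity, fun m hm D hD => ?_⟩
  have hmm0 : m0 ≤ m := (le_max_left _ _).trans hm
  have hmpos : 0 < m := lt_of_lt_of_le hm0 hmm0
  have hη : 0 < β / m := by positivity
  have hηρ : β / m ≤ ρ := by
    rw [div_le_iff₀ hmpos, mul_comm, ← div_le_iff₀ hρ]
    exact ((le_max_left _ _).trans (le_max_right _ _)).trans hm
  have hηρ0 : β / m ≤ ρ0 := by
    rw [div_le_iff₀ hmpos, mul_comm, ← div_le_iff₀ hρ0]
    exact ((le_max_right _ _).trans (le_max_right _ _)).trans hm
  rw [← Ai_scaled hβ hcβ hmpos D, intervalIntegral.integral_of_le (by linarith [Real.pi_pos]),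
    ← integral_indicator measurableSet_Ioc, ← integral_const_mul]
  set c : ℝ := α * (1 - α ^ 2) / 2
  set W : ℝ → ℂ := fun s => s + (β / m : ℝ) * Complex.I with hW
  have hWc : Continuous W := by rw [hW]; fun_prop
  set F : ℝ → ℂ := fun s => G (W s) * Complex.exp (Complex.I * ((m : ℂ) ^ 3 * qS α (W s)))
    * Complex.exp (Complex.I * (D * W s)) with hF
  set A : ℝ → ℂ := fun s => G 0 * Complex.exp (Complex.I * ((m : ℂ) ^ 3 * ((c : ℂ) * W s ^ 3 / 3)
      + D * W s)) with hA
  have hFc : Continuous F := by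
    rw [continuous_iff_continuousAt]
    intro s
    have him : (W s).im = β / m := by simp [hW]
    have h2 : ContinuousAt (fun s => G (W s)) s :=
      ContinuousAt.comp (hGc (W s) (by rw [him]; exact hη.le) (by rwa [him])) hWc.continuousAt
    have h3 : ContinuousAt (fun s => qS α (W s)) s :=
      ContinuousAt.comp (hasDerivAt_qS (hstrip (W s) (by
        rw [him, abs_of_pos hη]; exact hηρ0))).continuousAt hWc.continuousAt
    have h4 : ContinuousAt W s := hWc.continuousAt
    clear hGc
    rw [hF]
    exact (h2.mul (by fun_prop)).mul (by fun_prop)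
  have hFi : Integrable (Set.indicator (Set.Ioc (-Real.pi) Real.pi) F) := by
    rw [integrable_indicator_iff measurableSet_Ioc]
    exact (hFc.integrableOn_Icc).mono_set Set.Ioc_subset_Icc_self
  have hAc : Continuous A := by rw [hA]; fun_prop
  have hgi : Integrable fun s : ℝ =>
      Real.exp (L * β) * (C / m * Real.exp (-(κ * m ^ 2) * s ^ 2)) :=
    ((integrable_exp_neg_mul_sq (by positivity)).const_mul _).const_mul _
  have hDn : ∀ s, ‖Complex.exp (Complex.I * (D * W s))‖ ≤ Real.exp (L * β) := by
    intro s
    rw [Complex.norm_exp]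
    apply Real.exp_le_exp.2
    have : (Complex.I * (D * W s)).re = -D * (β / m) := by
      rw [Complex.I_mul_re, Complex.im_ofReal_mul]; simp [hW]
    rw [this]
    calc -D * (β / m) ≤ |D| * (β / m) := by gcongr; exact neg_le_abs D
      _ ≤ L * m * (β / m) := by gcongr
      _ = L * β := by field_simp
  have hAe : ∀ s, A s = G 0 * Complex.exp (Complex.I * ((m : ℂ) ^ 3 * ((c : ℂ) * W s ^ 3 / 3)))
      * Complex.exp (Complex.I * (D * W s)) := by
    intro s; simp only [hA]; rw [mul_assoc, ← Complex.exp_add]; ring_nf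
  have hbound : ∀ s, ‖Set.indicator (Set.Ioc (-Real.pi) Real.pi) F s - A s‖ ≤
      Real.exp (L * β) * (C / m * Real.exp (-(κ * m ^ 2) * s ^ 2)) ∨ s = -Real.pi := by
    intro s
    by_cases hs : s ∈ Set.Ioc (-Real.pi) Real.pi
    · left
      rw [Set.indicator_of_mem hs, hAe, hF, ← sub_mul, norm_mul, mul_comm (Real.exp (L * β))]
      gcongr
      · exact (hpt m hmm0 s).1 (abs_le.2 ⟨hs.1.le, hs.2⟩)
      · exact hDn s
    · by_cases hs2 : s = -Real.pi
      · exact Or.inr hs2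
      left
      rw [Set.indicator_of_notMem hs, zero_sub, norm_neg, hAe, norm_mul,
        mul_comm (Real.exp (L * β))]
      gcongr
      · apply (hpt m hmm0 s).2
        by_contra hcon
        push Not at hcon
        have := abs_le.1 hcon
        exact hs ⟨lt_of_le_of_ne this.1 (Ne.symm hs2), this.2⟩
      · exact hDn s
  have hae : ∀ᵐ s : ℝ, ‖Set.indicator (Set.Ioc (-Real.pi) Real.pi) F s - A s‖ ≤
      Real.exp (L * β) * (C / m * Real.exp (-(κ * m ^ 2) * s ^ 2)) := by
    filter_upwards [Measure.ae_ne volume (-Real.pi)] with s hs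
    exact (hbound s).resolve_right hs
  have hdi : Integrable fun s => Set.indicator (Set.Ioc (-Real.pi) Real.pi) F s - A s :=
    hgi.mono' (hFi.aestronglyMeasurable.sub hAc.aestronglyMeasurable) hae
  have hAi : Integrable A := by
    have := hFi.sub hdi
    refine this.congr (ae_of_all _ fun s => ?_)
    simp
  rw [← integral_sub hFi hAi]
  refine (norm_integral_le_of_norm_le hgi hae).trans (le_of_eq ?_)
  rw [integral_const_mul, integral_const_mul, integral_gaussian, ← div_div,
    Real.sqrt_div (by positivity), Real.sqrt_sq hmpos.le]
  field_simp

/-! ### Integral representation of the walk -/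

/-- The point `ζ(w) = εi e^{−iεw}` of the punctured plane; `w` real parametrizes the unit circle,
starting from the critical point `εi`. -/
def zt (ε : ℝ) (w : ℂ) : ℂ := ε * Complex.I * Complex.exp (-(Complex.I * ε * w))

/-- First component of `E(w)φ`, where `E(w) = (A(ωζ) − λ⁻¹)/(λ − λ⁻¹)` is the spectral projection of
`A(ωζ(w))` onto the eigenvalue `λ = α sin w + iS(w)`. -/
def eP1 (a b : ℂ) (ε : ℝ) (φ : ℂ × ℂ) (w : ℂ) : ℂ :=
  (((‖a‖ : ℂ) * (zt ε w)⁻¹ - ‖a‖ * Complex.sin w + Complex.I * sS ‖a‖ w) * φ.1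
    + b * (a / ‖a‖) * zt ε w * φ.2) / (2 * Complex.I * sS ‖a‖ w)

/-- Second component of the vector `E(w)φ` described at `eP1`. -/
def eP2 (a b : ℂ) (ε : ℝ) (φ : ℂ × ℂ) (w : ℂ) : ℂ :=
  (-((starRingEnd ℂ) b * (a / ‖a‖)⁻¹ * (zt ε w)⁻¹) * φ.1
    + ((‖a‖ : ℂ) * zt ε w - ‖a‖ * Complex.sin w + Complex.I * sS ‖a‖ w) * φ.2)
    / (2 * Complex.I * sS ‖a‖ w)

/-- The eigenvalue `λ = α sin w + iS(w)` of `A(ωζ(w))`. -/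
def lamW (α : ℝ) (w : ℂ) : ℂ := α * Complex.sin w + Complex.I * sS α w

lemma eps_sq {ε : ℝ} (hε : ε = 1 ∨ ε = -1) : (ε : ℂ) ^ 2 = 1 := by
  rcases hε with h | h <;> rw [h] <;> norm_num

lemma eps_ne {ε : ℝ} (hε : ε = 1 ∨ ε = -1) : (ε : ℂ) ≠ 0 := by
  rcases hε with h | h <;> rw [h] <;> norm_num

lemma zt_ne {ε : ℝ} (hε : ε = 1 ∨ ε = -1) (w : ℂ) : zt ε w ≠ 0 :=
  mul_ne_zero (mul_ne_zero (eps_ne hε) Complex.I_ne_zero) (Complex.exp_ne_zero _)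

lemma zt_add_inv {ε : ℝ} (hε : ε = 1 ∨ ε = -1) (w : ℂ) :
    zt ε w + (zt ε w)⁻¹ = 2 * Complex.sin w := by
  have h1 : (zt ε w)⁻¹ = -(ε * Complex.I) * Complex.exp (Complex.I * ε * w) := by
    apply inv_eq_of_mul_eq_one_right
    rw [zt]
    have h2 : Complex.exp (-(Complex.I * ε * w)) * Complex.exp (Complex.I * ε * w) = 1 := by
      rw [← Complex.exp_add]; simp
    linear_combination (-(ε : ℂ) ^ 2 * Complex.I ^ 2) * h2 - (ε : ℂ) ^ 2 * Complex.I_sq + eps_sq hε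
  rw [h1, zt, Complex.sin]
  rcases hε with h | h <;> subst h
  · have e1 : -(Complex.I * ((1 : ℝ) : ℂ) * w) = -w * Complex.I := by push_cast; ring
    have e2 : (Complex.I * ((1 : ℝ) : ℂ) * w) = w * Complex.I := by push_cast; ring
    rw [e1, e2]; push_cast; ring
  · have e1 : -(Complex.I * ((-1 : ℝ) : ℂ) * w) = w * Complex.I := by push_cast; ring
    have e2 : (Complex.I * ((-1 : ℝ) : ℂ) * w) = -w * Complex.I := by push_cast; ring
    rw [e1, e2]; push_cast; ring

lemma eigen_alg {p q B1 B2 τ S x y : ℂ} (h1 : p * q + B1 * B2 = 1) (h2 : p + q = 2 * τ)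
    (h3 : S ^ 2 = 1 - τ ^ 2) :
    p * ((p - τ + Complex.I * S) * x + B1 * y) + B1 * (-B2 * x + (q - τ + Complex.I * S) * y)
      = (τ + Complex.I * S) * ((p - τ + Complex.I * S) * x + B1 * y) ∧
    -B2 * ((p - τ + Complex.I * S) * x + B1 * y) + q * (-B2 * x + (q - τ + Complex.I * S) * y)
      = (τ + Complex.I * S) * (-B2 * x + (q - τ + Complex.I * S) * y) := by
  have hI := Complex.I_sq
  constructor
  · linear_combination (p * x + B1 * y) * h2 - x * h1 - S ^ 2 * x * hI + x * h3
  · linear_combination (q * y - B2 * x) * h2 - y * h1 - S ^ 2 * y * hI + y * h3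

lemma phase_facts {a b : ℂ} (hab : a * b ≠ 0) :
    (‖a‖ : ℂ) ≠ 0 ∧ (a / ‖a‖) ≠ 0 ∧ (starRingEnd ℂ) a * (a / ‖a‖) = ‖a‖ ∧
      a * (a / ‖a‖)⁻¹ = ‖a‖ := by
  have ha : a ≠ 0 := left_ne_zero_of_mul hab
  have h1 : (‖a‖ : ℂ) ≠ 0 := by exact_mod_cast norm_ne_zero_iff.2 ha
  refine ⟨h1, div_ne_zero ha h1, ?_, ?_⟩
  · rw [mul_div_assoc', mul_comm, Complex.mul_conj, Complex.normSq_eq_norm_sq]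
    push_cast; field_simp
  · rw [inv_div]; field_simp

/-- `E(w)φ` is an eigenvector of `A(z)`, `z = ωζ(w)`, with eigenvalue `lamW`. -/
lemma eigen {a b : ℂ} (hab1 : ‖a‖ ^ 2 + ‖b‖ ^ 2 = 1) (hab : a * b ≠ 0) {ε : ℝ}
    (hε : ε = 1 ∨ ε = -1) (φ : ℂ × ℂ) {w : ℂ} (hw : 0 < (vS ‖a‖ w).re) :
    a * (a / ‖a‖ * zt ε w)⁻¹ * eP1 a b ε φ w + b * (a / ‖a‖ * zt ε w) * eP2 a b ε φ w
      = lamW ‖a‖ w * eP1 a b ε φ w ∧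
    -(starRingEnd ℂ) b * (a / ‖a‖ * zt ε w)⁻¹ * eP1 a b ε φ w
      + (starRingEnd ℂ) a * (a / ‖a‖ * zt ε w) * eP2 a b ε φ w
      = lamW ‖a‖ w * eP2 a b ε φ w := by
  obtain ⟨hα, hω, hca, hai⟩ := phase_facts hab
  have hz := zt_ne hε w
  have hbb : b * (starRingEnd ℂ) b = 1 - (‖a‖ : ℂ) ^ 2 := by
    rw [Complex.mul_conj, Complex.normSq_eq_norm_sq, ← Complex.ofReal_pow, ← Complex.ofReal_one,
      ← Complex.ofReal_sub]
    congr 1; linarith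
  have h3 := sS_sq hw
  rw [vS, ← mul_pow] at h3
  have h5 : zt ε w * (zt ε w)⁻¹ = 1 := mul_inv_cancel₀ hz
  have h6 : a / (‖a‖ : ℂ) * (a / ‖a‖)⁻¹ = 1 := mul_inv_cancel₀ hω
  have h7 : (‖a‖ : ℂ) * (zt ε w)⁻¹ * ((‖a‖ : ℂ) * zt ε w)
      + b * (a / ‖a‖) * zt ε w * ((starRingEnd ℂ) b * (a / ‖a‖)⁻¹ * (zt ε w)⁻¹) = 1 := by
    linear_combination ((‖a‖ : ℂ) ^ 2 + b * (starRingEnd ℂ) b * (a / (‖a‖ : ℂ) * (a / ‖a‖)⁻¹)) * h5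
      + b * (starRingEnd ℂ) b * h6 + hbb
  have h8 : (‖a‖ : ℂ) * (zt ε w)⁻¹ + (‖a‖ : ℂ) * zt ε w = 2 * (‖a‖ * Complex.sin w) := by
    linear_combination (‖a‖ : ℂ) * zt_add_inv hε w
  obtain ⟨e1, e2⟩ := eigen_alg (x := φ.1) (y := φ.2) h7 h8 h3
  have e3 : a * (a / ‖a‖ * zt ε w)⁻¹ = (‖a‖ : ℂ) * (zt ε w)⁻¹ := by
    rw [mul_inv, ← mul_assoc, hai]
  have e4 : (starRingEnd ℂ) a * (a / ‖a‖ * zt ε w) = (‖a‖ : ℂ) * zt ε w := by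
    rw [← mul_assoc, hca]
  have e5 : -(starRingEnd ℂ) b * (a / ‖a‖ * zt ε w)⁻¹
      = -((starRingEnd ℂ) b * (a / ‖a‖)⁻¹ * (zt ε w)⁻¹) := by rw [mul_inv]; ring
  rw [e3, e4, e5, ← mul_assoc b, eP1, eP2, lamW]
  generalize (a / (‖a‖ : ℂ))⁻¹ = oi at *
  generalize a / (‖a‖ : ℂ) = o at *
  generalize (zt ε w)⁻¹ = zi at *
  constructor
  · linear_combination (2 * Complex.I * sS ‖a‖ w)⁻¹ * e1
  · linear_combination (2 * Complex.I * sS ‖a‖ w)⁻¹ * e2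

lemma zt_add_pi {ε : ℝ} (hε : ε = 1 ∨ ε = -1) (w : ℂ) : zt ε (w + Real.pi) = - zt ε w := by
  rw [zt, zt]
  have h : Complex.exp (-(Complex.I * ε * (w + Real.pi)))
      = -Complex.exp (-(Complex.I * ε * w)) := by
    have : -(Complex.I * ε * (w + Real.pi))
      = -(Complex.I * ε * w) + -(ε * (Real.pi * Complex.I)) := by ring
    rw [this, Complex.exp_add]
    rcases hε with h | h <;> subst h
    · simp [Complex.exp_neg]
    · simp
  rw [h]; ring

lemma sS_add_pi (α : ℝ) (w : ℂ) : sS α (w + Real.pi) = sS α w := by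
  simp [sS, vS, Complex.sin_add_pi]

/-- Passing to the antipodal point exchanges the two spectral projections. -/
lemma eP_add_pi {a b : ℂ} {ε : ℝ} (hε : ε = 1 ∨ ε = -1) (φ : ℂ × ℂ) (w : ℂ) :
    eP1 a b ε φ (w + Real.pi) = φ.1 - eP1 a b ε φ w ∧
    eP2 a b ε φ (w + Real.pi) = φ.2 - eP2 a b ε φ w := by
  have hS := sS_ne (α := ‖a‖) w
  have hI := Complex.I_ne_zero
  rw [eP1, eP1, eP2, eP2, zt_add_pi hε, sS_add_pi, Complex.sin_add_pi, inv_neg]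
  generalize (zt ε w)⁻¹ = zi
  generalize (a / (‖a‖ : ℂ))⁻¹ = oi
  generalize a / (‖a‖ : ℂ) = o
  constructor <;> (field_simp; ring)

lemma differentiableAt_zt (ε : ℝ) (w : ℂ) : DifferentiableAt ℂ (zt ε) w := by
  unfold zt; fun_prop

lemma differentiableAt_eP {a b : ℂ} {ε : ℝ} (hε : ε = 1 ∨ ε = -1) (φ : ℂ × ℂ) {w : ℂ}
    (hw : 0 < (vS ‖a‖ w).re) :
    DifferentiableAt ℂ (eP1 a b ε φ) w ∧ DifferentiableAt ℂ (eP2 a b ε φ) w := by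
  have hS : DifferentiableAt ℂ (sS ‖a‖) w := (hasDerivAt_sS hw).differentiableAt
  have hz := differentiableAt_zt ε w
  have hzi : DifferentiableAt ℂ (fun w => (zt ε w)⁻¹) w := hz.inv (zt_ne hε w)
  have hden : 2 * Complex.I * sS ‖a‖ w ≠ 0 :=
    mul_ne_zero (mul_ne_zero two_ne_zero Complex.I_ne_zero) (sS_ne w)
  constructor
  · unfold eP1
    exact DifferentiableAt.div (by fun_prop) (by fun_prop) hden
  · unfold eP2
    exact DifferentiableAt.div (by fun_prop) (by fun_prop) hden

lemma integral_zt_zpow {ε : ℝ} (hε : ε = 1 ∨ ε = -1) (o : ℂ) (η : ℝ) {y : ℤ} (hy : y ≠ 0) :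
    ∫ s in (-Real.pi)..Real.pi, (o * zt ε (s + η * Complex.I)) ^ (-y) = 0 := by
  have hε0 := eps_ne hε
  set c : ℂ := Complex.I * ε * y with hc
  have hc0 : c ≠ 0 := mul_ne_zero (mul_ne_zero Complex.I_ne_zero hε0) (by exact_mod_cast hy)
  have e : ∀ s : ℝ, (o * zt ε (s + η * Complex.I)) ^ (-y)
      = ((o * (ε * Complex.I)) ^ (-y) * Complex.exp (c * (η * Complex.I))) * Complex.exp (c * s) := by
    intro s
    rw [zt, ← mul_assoc, mul_zpow, ← Complex.exp_int_mul, mul_assoc _ (Complex.exp _),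
      ← Complex.exp_add]
    congr 2
    rw [hc]; push_cast; ring
  simp_rw [e]
  rw [intervalIntegral.integral_const_mul, integral_exp_mul_complex hc0]
  have : Complex.exp (c * (Real.pi : ℝ)) = Complex.exp (c * ((-Real.pi : ℝ) : ℂ)) := by
    rw [Complex.exp_eq_exp_iff_exists_int, hc]
    rcases hε with h | h <;> subst h
    · exact ⟨y, by push_cast; ring⟩
    · exact ⟨-y, by push_cast; ring⟩
  rw [this]; simp

/-- Coefficient extraction along a whole period when the integrand is one spectral component:
its antipodal translate supplies the other one. -/
lemma initial_aux {ε : ℝ} (hε : ε = 1 ∨ ε = -1) (o : ℂ) (η : ℝ) (y : ℤ)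
    (e : ℂ → ℂ) (x : ℂ) (he : ∀ w, e (w + Real.pi) = x - e w)
    (hc : Continuous fun s : ℝ => (o * zt ε (s + η * Complex.I)) ^ (-y) * e (s + η * Complex.I)) :
    (1 + (-1 : ℂ) ^ y) * (1 / (2 * Real.pi)) *
      ∫ s in (-Real.pi)..Real.pi, (o * zt ε (s + η * Complex.I)) ^ (-y) * e (s + η * Complex.I)
      = if y = 0 then x else 0 := by
  rcases Int.even_or_odd y with hev | hodd
  · set h : ℝ → ℂ := fun s => (o * zt ε (s + η * Complex.I)) ^ (-y) * e (s + η * Complex.I) with hh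
    have hshift : ∀ s : ℝ, h (s + Real.pi)
        = (o * zt ε (s + η * Complex.I)) ^ (-y) * (x - e (s + η * Complex.I)) := by
      intro s
      have : (((s + Real.pi : ℝ) : ℂ) + η * Complex.I) = (s + η * Complex.I) + Real.pi := by
        push_cast; ring
      simp only [hh]
      rw [this, he, zt_add_pi hε, mul_neg, hev.neg.neg_zpow]
    have hper : Function.Periodic h (2 * Real.pi) := by
      intro s
      have e1 : s + 2 * Real.pi = (s + Real.pi) + Real.pi := by ring
      have : (((s + Real.pi : ℝ) : ℂ) + η * Complex.I) = (s + η * Complex.I) + Real.pi := by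
        push_cast; ring
      rw [e1, hshift, this, he, zt_add_pi hε, mul_neg, hev.neg.neg_zpow]
      simp only [hh]; ring
    have e2 : ∫ s in (-Real.pi)..Real.pi, h s = ∫ s in (-Real.pi)..Real.pi, h (s + Real.pi) := by
      rw [intervalIntegral.integral_comp_add_right]
      have := hper.intervalIntegral_add_eq (-Real.pi) (-Real.pi + Real.pi)
      rw [show -Real.pi + 2 * Real.pi = Real.pi by ring,
        show -Real.pi + Real.pi + 2 * Real.pi = Real.pi + Real.pi by ring] at this
      exact this
    have e3 : 2 * ∫ s in (-Real.pi)..Real.pi, h s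
        = (∫ s in (-Real.pi)..Real.pi, (o * zt ε (s + η * Complex.I)) ^ (-y)) * x := by
      rw [two_mul]
      nth_rewrite 2 [e2]
      have hsh : IntervalIntegrable (fun s => h (s + Real.pi)) volume (-Real.pi) Real.pi :=
        (hc.comp (continuous_add_const Real.pi)).intervalIntegrable _ _
      rw [← intervalIntegral.integral_add (hc.intervalIntegrable _ _) hsh,
        ← intervalIntegral.integral_mul_const]
      refine intervalIntegral.integral_congr fun s _ => ?_
      simp only [hshift]
      simp only [hh]; ring
    have hpi : (Real.pi : ℂ) ≠ 0 := by exact_mod_cast Real.pi_ne_zero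
    rw [hev.neg_one_zpow]
    have e4 : ((1 : ℂ) + 1) * (1 / (2 * Real.pi)) * ∫ s in (-Real.pi)..Real.pi, h s
        = (1 / (2 * Real.pi)) * (2 * ∫ s in (-Real.pi)..Real.pi, h s) := by ring
    rw [e4, e3]
    split_ifs with hy
    · subst hy
      simp only [neg_zero, zpow_zero, intervalIntegral.integral_const, sub_neg_eq_add,
        Complex.real_smul, mul_one]
      push_cast
      field_simp; ring
    · rw [integral_zt_zpow hε o η hy]; simp
  · rw [hodd.neg_one_zpow]
    have : y ≠ 0 := by rintro rfl; simp at hodd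
    simp [this]

/-- Exact integral representation of the walk on the line `Im w = η`. -/
lemma walk_repr {a b : ℂ} (hab1 : ‖a‖ ^ 2 + ‖b‖ ^ 2 = 1) (hab : a * b ≠ 0) {ε : ℝ}
    (hε : ε = 1 ∨ ε = -1) (φ : ℂ × ℂ) (η : ℝ)
    (hη : ∀ s : ℝ, 0 < (vS ‖a‖ (s + η * Complex.I)).re) (n : ℕ) (y : ℤ) :
    ((qwStep a b)^[n] (qwDelta φ)) y =
      ((1 + (-1 : ℂ) ^ ((n : ℤ) + y)) * (1 / (2 * Real.pi)) * ∫ s in (-Real.pi)..Real.pi,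
        lamW ‖a‖ (s + η * Complex.I) ^ n * ((a / ‖a‖ * zt ε (s + η * Complex.I)) ^ (-y)
          * eP1 a b ε φ (s + η * Complex.I)),
       (1 + (-1 : ℂ) ^ ((n : ℤ) + y)) * (1 / (2 * Real.pi)) * ∫ s in (-Real.pi)..Real.pi,
        lamW ‖a‖ (s + η * Complex.I) ^ n * ((a / ‖a‖ * zt ε (s + η * Complex.I)) ^ (-y)
          * eP2 a b ε φ (s + η * Complex.I))) := by
  obtain ⟨hα, hω, hca, hai⟩ := phase_facts hab
  have hz0 : ∀ w, a / ‖a‖ * zt ε w ≠ 0 := fun w => mul_ne_zero hω (zt_ne hε w)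
  have hWc : Continuous fun s : ℝ => (s + η * Complex.I : ℂ) := by fun_prop
  have hzc : ∀ y : ℤ, Continuous fun s : ℝ => (a / ‖a‖ * zt ε (s + η * Complex.I)) ^ (-y) := by
    intro y
    refine Continuous.zpow₀ ?_ _ fun s => Or.inl (hz0 _)
    unfold zt; fun_prop
  have hc1 : Continuous fun s : ℝ => eP1 a b ε φ (s + η * Complex.I) :=
    continuous_iff_continuousAt.2 fun s =>
      ((differentiableAt_eP hε φ (hη s)).1.continuousAt.comp (f := fun s : ℝ => (s + η * Complex.I : ℂ))
        hWc.continuousAt)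
  have hc2 : Continuous fun s : ℝ => eP2 a b ε φ (s + η * Complex.I) :=
    continuous_iff_continuousAt.2 fun s =>
      ((differentiableAt_eP hε φ (hη s)).2.continuousAt.comp (f := fun s : ℝ => (s + η * Complex.I : ℂ))
        hWc.continuousAt)
  have hcS : Continuous fun s : ℝ => sS ‖a‖ (s + η * Complex.I) :=
    continuous_iff_continuousAt.2 fun s =>
      ((hasDerivAt_sS (hη s)).continuousAt.comp (f := fun s : ℝ => (s + η * Complex.I : ℂ))
        hWc.continuousAt)
  have hcl : Continuous fun s : ℝ => lamW ‖a‖ (s + η * Complex.I) := by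
    unfold lamW; fun_prop
  have hi1 : ∀ (n : ℕ) (y : ℤ), IntervalIntegrable (fun s : ℝ => lamW ‖a‖ (s + η * Complex.I) ^ n *
      ((a / ‖a‖ * zt ε (s + η * Complex.I)) ^ (-y) * eP1 a b ε φ (s + η * Complex.I)))
      volume (-Real.pi) Real.pi := fun n y =>
    ((hcl.pow n).mul ((hzc y).mul hc1)).intervalIntegrable _ _
  have hi2 : ∀ (n : ℕ) (y : ℤ), IntervalIntegrable (fun s : ℝ => lamW ‖a‖ (s + η * Complex.I) ^ n *
      ((a / ‖a‖ * zt ε (s + η * Complex.I)) ^ (-y) * eP2 a b ε φ (s + η * Complex.I)))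
      volume (-Real.pi) Real.pi := fun n y =>
    ((hcl.pow n).mul ((hzc y).mul hc2)).intervalIntegrable _ _
  induction n generalizing y with
  | zero =>
    simp only [Function.iterate_zero, id_eq, pow_zero, one_mul, Nat.cast_zero, zero_add]
    rw [initial_aux hε _ η y _ φ.1 (fun w => (eP_add_pi hε φ w).1) ((hzc y).mul hc1),
      initial_aux hε _ η y _ φ.2 (fun w => (eP_add_pi hε φ w).2) ((hzc y).mul hc2), qwDelta]
    split_ifs <;> rfl
  | succ n ih =>
    rw [Function.iterate_succ_apply', qwStep, ih, ih]
    have p1 : (-1 : ℂ) ^ ((n : ℤ) + (y + 1)) = (-1 : ℂ) ^ (((n + 1 : ℕ) : ℤ) + y) := by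
      congr 1; push_cast; ring
    have p2 : (-1 : ℂ) ^ ((n : ℤ) + (y - 1)) = (-1 : ℂ) ^ (((n + 1 : ℕ) : ℤ) + y) := by
      rw [show ((n + 1 : ℕ) : ℤ) + y = ((n : ℤ) + (y - 1)) + 2 by push_cast; ring,
        zpow_add₀ (by norm_num : (-1 : ℂ) ≠ 0) ((n : ℤ) + (y - 1)) 2]
      norm_num
    have q1 : ∀ w, (a / ‖a‖ * zt ε w) ^ (-(y + 1))
        = (a / ‖a‖ * zt ε w) ^ (-y) * (a / ‖a‖ * zt ε w)⁻¹ := by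
      intro w; rw [neg_add, zpow_add₀ (hz0 w), zpow_neg_one]
    have q2 : ∀ w, (a / ‖a‖ * zt ε w) ^ (-(y - 1))
        = (a / ‖a‖ * zt ε w) ^ (-y) * (a / ‖a‖ * zt ε w) := by
      intro w; rw [neg_sub, sub_eq_neg_add, zpow_add₀ (hz0 w), zpow_one]
    simp only [p1, p2]
    refine Prod.ext ?_ ?_
    · simp only
      rw [mul_left_comm a, mul_left_comm b, ← mul_add, ← intervalIntegral.integral_const_mul,
        ← intervalIntegral.integral_const_mul,
        ← intervalIntegral.integral_add ((hi1 n _).const_mul _) ((hi2 n _).const_mul _)]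
      congr 1
      refine intervalIntegral.integral_congr fun s _ => ?_
      simp only [q1, q2]
      have := (eigen hab1 hab hε φ (hη s)).1
      rw [pow_succ]
      linear_combination (lamW ‖a‖ (s + η * Complex.I) ^ n *
        (a / ‖a‖ * zt ε (s + η * Complex.I)) ^ (-y)) * this
    · simp only
      rw [mul_left_comm (-(starRingEnd ℂ) b), mul_left_comm ((starRingEnd ℂ) a), ← mul_add,
        ← intervalIntegral.integral_const_mul,
        ← intervalIntegral.integral_const_mul,
        ← intervalIntegral.integral_add ((hi1 n _).const_mul _) ((hi2 n _).const_mul _)]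
      congr 1
      refine intervalIntegral.integral_congr fun s _ => ?_
      simp only [q1, q2]
      have := (eigen hab1 hab hε φ (hη s)).2
      rw [pow_succ]
      linear_combination (lamW ‖a‖ (s + η * Complex.I) ^ n *
        (a / ‖a‖ * zt ε (s + η * Complex.I)) ^ (-y)) * this

/-! ### Amplitude and phase at the critical point -/

/-- A function continuous on a compact set and differentiable at `0` satisfies a Lipschitz bound
based at `0` on that set. -/
lemma lipschitz_at_zero {K : Set ℂ} (hK : IsCompact K) (G : ℂ → ℂ) (hc : ContinuousOn G K)
    (hd : DifferentiableAt ℂ G 0) : ∃ B : ℝ, 0 ≤ B ∧ ∀ w ∈ K, ‖G w - G 0‖ ≤ B * ‖w‖ := by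
  obtain ⟨c, hcO⟩ := hd.isBigO_sub.bound
  obtain ⟨δ, hδ, hball⟩ := Metric.eventually_nhds_iff.1 hcO
  obtain ⟨M, hM⟩ := hK.exists_bound_of_continuousOn hc
  refine ⟨max |c| ((|M| + ‖G 0‖) / δ), le_max_of_le_left (abs_nonneg _), fun w hw => ?_⟩
  rcases lt_or_ge ‖w‖ δ with h | h
  · have := hball (y := w) (by simpa using h)
    rw [sub_zero] at this
    exact this.trans (mul_le_mul_of_nonneg_right ((le_abs_self c).trans (le_max_left _ _))
      (norm_nonneg _))
  · calc ‖G w - G 0‖ ≤ ‖G w‖ + ‖G 0‖ := norm_sub_le _ _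
      _ ≤ |M| + ‖G 0‖ := by linarith [hM w hw, le_abs_self M]
      _ = (|M| + ‖G 0‖) / δ * δ := by field_simp
      _ ≤ max |c| ((|M| + ‖G 0‖) / δ) * ‖w‖ := by
          gcongr
          exact le_max_right _ _

lemma norm_lt_one {a b : ℂ} (hab1 : ‖a‖ ^ 2 + ‖b‖ ^ 2 = 1) (hab : a * b ≠ 0) :
    0 < ‖a‖ ∧ ‖a‖ < 1 := by
  have h1 : 0 < ‖a‖ := norm_pos_iff.2 (left_ne_zero_of_mul hab)
  have h2 : 0 < ‖b‖ := norm_pos_iff.2 (right_ne_zero_of_mul hab)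
  exact ⟨h1, by nlinarith⟩

/-- The spectral projection at `w = 0` is the rank-one projection onto `u(εi)`. -/
lemma amp_zero {a b : ℂ} (hab1 : ‖a‖ ^ 2 + ‖b‖ ^ 2 = 1) (hab : a * b ≠ 0) {ε : ℝ}
    (hε : ε = 1 ∨ ε = -1) (φ ψ : ℂ × ℂ) :
    eP1 a b ε φ 0 * (starRingEnd ℂ) ψ.1 + eP2 a b ε φ 0 * (starRingEnd ℂ) ψ.2
      = fpsi a b φ ψ ((ε : ℂ) * Complex.I) := by
  obtain ⟨h0, h1⟩ := norm_lt_one hab1 hab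
  obtain ⟨hα, hω, hca, hai⟩ := phase_facts hab
  have hE := eps_sq hε
  have hI := Complex.I_sq
  have hz : zt ε 0 = ε * Complex.I := by simp [zt]
  have hzi : (zt ε 0)⁻¹ = -(ε * Complex.I) := by
    apply inv_eq_of_mul_eq_one_right
    rw [hz]
    linear_combination -(ε : ℂ) ^ 2 * hI + hE
  have hS : sS ‖a‖ 0 = 1 := by simp [sS, vS]
  have hi : (2 * Complex.I * 1)⁻¹ = -Complex.I / 2 := by
    apply inv_eq_of_mul_eq_one_right
    linear_combination -hI
  have e1 : eP1 a b ε φ 0 = ((1 - ε * ‖a‖) * φ.1 + ε * b * (a / ‖a‖) * φ.2) / 2 := by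
    rw [eP1, hzi, hz, hS, Complex.sin_zero, div_eq_mul_inv, hi]
    linear_combination
      (-((1 - ε * ‖a‖) * φ.1 + ε * b * (a / ‖a‖) * φ.2) / 2) * hI
  have e2 : eP2 a b ε φ 0
      = (ε * (starRingEnd ℂ) b * (a / ‖a‖)⁻¹ * φ.1 + (1 + ε * ‖a‖) * φ.2) / 2 := by
    rw [eP2, hzi, hz, hS, Complex.sin_zero, div_eq_mul_inv, hi]
    linear_combination
      (-(ε * (starRingEnd ℂ) b * (a / ‖a‖)⁻¹ * φ.1 + (1 + ε * ‖a‖) * φ.2) / 2) * hI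
  have hphi : phit ((ε : ℂ) * Complex.I) = 0 := by
    rw [phit, ← hz, hzi, hz]; simp
  have hlam : lamS a ((ε : ℂ) * Complex.I) = Complex.I := by
    rw [lamS, hphi]; simp
  have hcz : (starRingEnd ℂ) ((ε : ℂ) * Complex.I) = -(ε * Complex.I) := by simp
  have hu2 : lamS a ((ε : ℂ) * Complex.I) - (‖a‖ : ℂ) * (starRingEnd ℂ) ((ε : ℂ) * Complex.I)
      = Complex.I * (1 + ε * ‖a‖) := by
    rw [hlam, hcz]; ring
  have ht : 0 < 1 + ε * ‖a‖ := by
    rcases hε with h | h <;> rw [h] <;> linarith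
  have hEr : ε ^ 2 = 1 := by exact_mod_cast hE
  have hp : pnormF a b ((ε : ℂ) * Complex.I) ^ 2 = 2 * (1 + ε * ‖a‖) := by
    rw [pnormF, hu2, Real.sq_sqrt (by positivity), norm_mul, Complex.norm_I, one_mul]
    have : ((1 : ℂ) + ε * ‖a‖) = ((1 + ε * ‖a‖ : ℝ) : ℂ) := by push_cast; rfl
    rw [this, Complex.norm_real, Real.norm_of_nonneg ht.le]
    linear_combination hab1 + ‖a‖ ^ 2 * hEr
  have hP : (((pnormF a b ((ε : ℂ) * Complex.I) : ℝ) : ℂ)⁻¹) ^ 2 * (2 * (1 + ε * ‖a‖)) = 1 := by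
    have h3 : (((pnormF a b ((ε : ℂ) * Complex.I) : ℝ) : ℂ)) ^ 2 = 2 * (1 + ε * ‖a‖) := by
      exact_mod_cast hp
    have h4 : (2 * (1 + ε * ‖a‖) : ℂ) ≠ 0 := by
      have : (2 * (1 + ε * ‖a‖) : ℝ) ≠ 0 := by positivity
      exact_mod_cast this
    rw [inv_pow, h3, inv_mul_cancel₀ h4]
  have hbb : b * (starRingEnd ℂ) b = 1 - (‖a‖ : ℂ) ^ 2 := by
    rw [Complex.mul_conj, Complex.normSq_eq_norm_sq, ← Complex.ofReal_pow, ← Complex.ofReal_one,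
      ← Complex.ofReal_sub]
    congr 1; linarith
  have hoo : a / (‖a‖ : ℂ) * (a / ‖a‖)⁻¹ = 1 := mul_inv_cancel₀ hω
  have hco : (starRingEnd ℂ) (a / (‖a‖ : ℂ)) = (a / ‖a‖)⁻¹ := by
    rw [eq_comm]
    apply inv_eq_of_mul_eq_one_right
    rw [map_div₀, Complex.conj_ofReal, div_mul_eq_mul_div, mul_div_assoc', mul_comm a,
      ← div_mul_eq_mul_div, div_mul_eq_mul_div, mul_div_assoc, hca, div_self hα]
  have hab' : a * b / (‖a‖ : ℂ) = a / ‖a‖ * b := by ring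
  rw [e1, e2, fpsi, innC, innC, uvec, hu2, hab']
  simp only [map_mul, map_add, map_one, map_inv₀, Complex.conj_ofReal, Complex.conj_I, hco]
  generalize (a / (‖a‖ : ℂ))⁻¹ = oi at *
  generalize a / (‖a‖ : ℂ) = o at *
  generalize ((pnormF a b ((ε : ℂ) * Complex.I) : ℝ) : ℂ)⁻¹ = P at *
  generalize (starRingEnd ℂ) b = bc at *
  generalize (starRingEnd ℂ) ψ.1 = x1 at *
  generalize (starRingEnd ℂ) ψ.2 = x2 at *
  generalize (‖a‖ : ℂ) = α at *
  generalize (ε : ℂ) = e at *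
  generalize φ.1 = f1 at *
  generalize φ.2 = f2 at *
  have key : P ^ 2 * (f1 * oi * bc * e + f2 * (1 + e * α)) * (o * b * e * x1 + (1 + e * α) * x2)
      = ((1 - e * α) * f1 + e * b * o * f2) / 2 * x1
        + (e * bc * oi * f1 + (1 + e * α) * f2) / 2 * x2 := by
    linear_combination f1 * x1 * (P ^ 2 * e ^ 2 * o * oi * hbb + P ^ 2 * e ^ 2 * (1 - α ^ 2) * hoo
      + P ^ 2 * (1 - α ^ 2) * hE + P ^ 2 * α ^ 2 * hE + (1 - e * α) / 2 * hP)
      + (f1 * x2 * e * oi * bc / 2 + f2 * x1 * e * o * b / 2 + f2 * x2 * (1 + e * α) / 2) * hP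
  rw [← key]
  linear_combination (P ^ 2 * (f1 * oi * bc * e + f2 * (1 + e * α))
    * (o * b * e * x1 + (1 + e * α) * x2)) * hI

/-- The oscillating factors of the integrand, with `εy = nα + εd`, split into the constant phase
at `w = 0` and the phase `n q(w) + εd w`. -/
lemma phase_id {ε : ℝ} (hε : ε = 1 ∨ ε = -1) {α : ℝ} {w : ℂ} (hw : 0 < (vS α w).re) (o : ℂ)
    (n : ℕ) (y : ℤ) (d : ℝ) (hy : (y : ℝ) = ε * n * α + d) :
    lamW α w ^ n * (o * zt ε w) ^ (-y)
      = o ^ (-y) * Complex.exp (Complex.I * Real.pi * ((((n : ℝ) - ε * y) / 2 : ℝ) : ℂ)) *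
        (Complex.exp (Complex.I * (n * qS α w)) * Complex.exp (Complex.I * ((ε * d : ℝ) * w))) := by
  have hE := eps_sq hε
  have hy' : (y : ℂ) = ε * n * α + d := by exact_mod_cast hy
  have hI : Complex.exp (Real.pi / 2 * Complex.I) = Complex.I := Complex.exp_pi_div_two_mul_I
  have hl : lamW α w = Complex.exp (Real.pi / 2 * Complex.I
      + (Complex.I * qS α w - Complex.I * α * w)) := by
    rw [Complex.exp_add, hI, Complex.exp_sub, exp_qS hw, mul_div_cancel_left₀ _
      (Complex.exp_ne_zero _), lamW, lS]
    linear_combination (α : ℂ) * Complex.sin w * Complex.I_sq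
  have hz : zt ε w = Complex.exp (ε * (Real.pi / 2 * Complex.I) - Complex.I * ε * w) := by
    rw [zt, sub_eq_add_neg, Complex.exp_add]
    congr 1
    rcases hε with h | h <;> subst h
    · simp [hI]
    · simp only [Complex.ofReal_neg, Complex.ofReal_one, neg_mul, one_mul, Complex.exp_neg, hI,
        Complex.inv_I]
  rw [hl, hz, mul_zpow, ← Complex.exp_nat_mul, ← Complex.exp_int_mul, mul_left_comm,
    ← Complex.exp_add, ← Complex.exp_add, mul_assoc (o ^ (-y)), ← Complex.exp_add]
  congr 2
  push_cast
  linear_combination Complex.I * ε * w * hy' + Complex.I * w * n * α * hE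

/-! ### The asymptotics at the wall -/

/-- Proposition `amp2wall`: Airy asymptotics of the transition amplitude
around the wall `y_n = ε n|a| + d_n`, `d_n = O(n^{1/3})`, `ε = ±1`:
`⟨Uⁿ(δ₀⊗φ), δ_{y_n}⊗ψ⟩ = ω^{−y_n} e^{iπ(n−εy_n)/2}(1+(−1)^{n+y_n}) f_ψ(εi) α₀ n^{−1/3}
Ai(ε α₀ n^{−1/3} d_n) + O(n^{−2/3})` with `α₀ = (2/(|a||b|²))^{1/3}`. -/
theorem stmt13 (a b : ℂ) (hab1 : ‖a‖ ^ 2 + ‖b‖ ^ 2 = 1) (hab : a * b ≠ 0)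
    (φ : ℂ × ℂ) (hφ : nsq φ = 1) (ε : ℝ) (hε : ε = 1 ∨ ε = -1)
    (y : ℕ → ℤ) (d : ℕ → ℝ)
    (hy : ∀ n : ℕ, (y n : ℝ) = ε * (n : ℝ) * ‖a‖ + d n)
    (hd : d =O[atTop] fun n : ℕ => (n : ℝ) ^ ((1 : ℝ) / 3))
    (ψ : ℂ × ℂ) (hψ : nsq ψ = 1) :
    (fun n : ℕ => innC (((qwStep a b)^[n] (qwDelta φ)) (y n)) ψ -
        (a / (‖a‖ : ℂ)) ^ (-(y n)) *
          Complex.exp (Complex.I * (Real.pi : ℂ) * ((((n : ℝ) - ε * (y n : ℝ)) / 2 : ℝ) : ℂ)) *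
          (1 + (-1 : ℂ) ^ ((n : ℤ) + y n)) *
          fpsi a b φ ψ ((ε : ℂ) * Complex.I) *
          (((2 / (‖a‖ * ‖b‖ ^ 2)) ^ ((1 : ℝ) / 3) : ℝ) : ℂ) *
          (((n : ℝ) ^ (-(1 : ℝ) / 3) : ℝ) : ℂ) *
          Ai (ε * (2 / (‖a‖ * ‖b‖ ^ 2)) ^ ((1 : ℝ) / 3) * (n : ℝ) ^ (-(1 : ℝ) / 3) * d n))
      =O[atTop] (fun n : ℕ => (n : ℝ) ^ (-(2 : ℝ) / 3)) := by
  obtain ⟨h0, h1⟩ := norm_lt_one hab1 hab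
  have hb : 0 < ‖b‖ := norm_pos_iff.2 (right_ne_zero_of_mul hab)
  set β : ℝ := (2 / (‖a‖ * ‖b‖ ^ 2)) ^ ((1 : ℝ) / 3) with hβdef
  have hβ : 0 < β := by positivity
  have hβ3 : β ^ 3 = 2 / (‖a‖ * ‖b‖ ^ 2) := by
    rw [hβdef, ← Real.rpow_natCast, ← Real.rpow_mul (by positivity)]
    norm_num
  have hcβ : (‖a‖ * (1 - ‖a‖ ^ 2) / 2) * β ^ 3 = 1 := by
    rw [hβ3, show 1 - ‖a‖ ^ 2 = ‖b‖ ^ 2 by linarith]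
    field_simp
  obtain ⟨ρ, hρ, hstrip⟩ := exists_strip h0 h1
  set G : ℂ → ℂ := fun w => eP1 a b ε φ w * (starRingEnd ℂ) ψ.1
    + eP2 a b ε φ w * (starRingEnd ℂ) ψ.2 with hG
  have hGd : ∀ w : ℂ, |w.im| ≤ ρ → DifferentiableAt ℂ G w := fun w hw =>
    ((differentiableAt_eP hε φ (hstrip w hw)).1.mul_const _).add
      ((differentiableAt_eP hε φ (hstrip w hw)).2.mul_const _)
  have hKc : IsCompact (Set.Icc (-Real.pi) Real.pi ×ℂ Set.Icc 0 ρ) :=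
    isCompact_Icc.reProdIm isCompact_Icc
  obtain ⟨B, hB, hlip⟩ := lipschitz_at_zero hKc G
    (fun w hw => (hGd w (by
      rw [abs_of_nonneg hw.2.1]; exact hw.2.2)).continuousAt.continuousWithinAt)
    (hGd 0 (by simpa using hρ.le))
  obtain ⟨L, hL⟩ := hd.bound
  obtain ⟨C, m0, hm0, hC⟩ := integral_asymp h0 h1 hβ hcβ G hρ hB
    (fun w hr hi1 hi2 => hlip w ⟨abs_le.1 hr, hi1, hi2⟩)
    (fun w hi1 hi2 => (hGd w (by rwa [abs_of_nonneg hi1])).continuousAt) L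
  have htend : Tendsto (fun n : ℕ => (n : ℝ) ^ ((1 : ℝ) / 3)) atTop atTop :=
    (tendsto_rpow_atTop (by norm_num)).comp tendsto_natCast_atTop_atTop
  refine IsBigO.of_bound (2 * (1 / (2 * Real.pi)) * C) ?_
  filter_upwards [hL, htend.eventually_ge_atTop m0, htend.eventually_ge_atTop (β / ρ),
    eventually_gt_atTop 0] with n hn1 hn2 hn3 hn0
  have hnpos : (0 : ℝ) < n := by exact_mod_cast hn0
  -- The integral is taken along the line `Im w = β/m` with `m = n^{1/3}`.
  set m : ℝ := (n : ℝ) ^ ((1 : ℝ) / 3) with hm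
  have hmpos : 0 < m := by positivity
  have hm3 : m ^ 3 = n := by
    rw [hm, ← Real.rpow_natCast, ← Real.rpow_mul hnpos.le]; norm_num
  have hmi : (n : ℝ) ^ (-(1 : ℝ) / 3) = m⁻¹ := by
    rw [hm, ← Real.rpow_neg hnpos.le]; norm_num
  have hm2 : (n : ℝ) ^ (-(2 : ℝ) / 3) = 1 / m ^ 2 := by
    rw [hm, ← Real.rpow_natCast, ← Real.rpow_mul hnpos.le, one_div, ← Real.rpow_neg hnpos.le]
    norm_num
  have hηρ : β / m ≤ ρ := by
    rw [div_le_iff₀ hmpos, mul_comm, ← div_le_iff₀ hρ]; exact hn3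
  have hη : ∀ s : ℝ, 0 < (vS ‖a‖ (s + (β / m : ℝ) * Complex.I)).re := by
    intro s
    apply hstrip
    simp only [Complex.add_im, Complex.ofReal_im, Complex.mul_im, Complex.ofReal_re, Complex.I_re,
      Complex.I_im, mul_one, mul_zero, zero_add, add_zero]
    rw [abs_of_pos (by positivity)]; exact hηρ
  have hεabs : |ε| = 1 := by rcases hε with h | h <;> rw [h] <;> simp
  have hDm : |ε * d n| ≤ L * m := by
    rw [abs_mul, hεabs, one_mul]
    simpa [Real.norm_eq_abs, abs_of_pos hmpos] using hn1
  have hmain := hC m hn2 (ε * d n) hDm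
  set T : ℂ := ∫ s in (-Real.pi)..Real.pi, G (s + (β / m : ℝ) * Complex.I) *
            Complex.exp (Complex.I * ((m : ℂ) ^ 3 * qS ‖a‖ (s + (β / m : ℝ) * Complex.I)))
            * Complex.exp (Complex.I * ((ε * d n : ℝ) * (s + (β / m : ℝ) * Complex.I))) with hT
  set c : ℂ := (a / (‖a‖ : ℂ)) ^ (-(y n)) *
    Complex.exp (Complex.I * (Real.pi : ℂ) * ((((n : ℝ) - ε * (y n : ℝ)) / 2 : ℝ) : ℂ)) with hc
  have hcn : ‖c‖ = 1 := by
    have e1 : ‖a / (‖a‖ : ℂ)‖ = 1 := by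
      rw [norm_div, Complex.norm_real, norm_norm, div_self h0.ne']
    rw [hc, norm_mul, norm_zpow, e1, one_zpow, one_mul, mul_assoc, ← Complex.ofReal_mul,
      mul_comm, Complex.norm_exp_ofReal_mul_I]
  have hm3c : (m : ℂ) ^ 3 = n := by exact_mod_cast hm3
  have hpi : (Real.pi : ℂ) ≠ 0 := by exact_mod_cast Real.pi_ne_zero
  have hwalk : innC (((qwStep a b)^[n] (qwDelta φ)) (y n)) ψ
      = c * (1 + (-1 : ℂ) ^ ((n : ℤ) + y n)) * (1 / (2 * Real.pi)) * T := by
    have hcont : ∀ e : ℂ → ℂ, (∀ s : ℝ, DifferentiableAt ℂ e (s + (β / m : ℝ) * Complex.I)) →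
        IntervalIntegrable (fun s : ℝ => lamW ‖a‖ (s + (β / m : ℝ) * Complex.I) ^ n *
          ((a / ‖a‖ * zt ε (s + (β / m : ℝ) * Complex.I)) ^ (-(y n))
            * e (s + (β / m : ℝ) * Complex.I))) volume (-Real.pi) Real.pi := by
      intro e he
      refine Continuous.intervalIntegrable (continuous_iff_continuousAt.2 fun s => ?_) _ _
      have hlam : DifferentiableAt ℂ (lamW ‖a‖) (s + (β / m : ℝ) * Complex.I) := by
        have := (hasDerivAt_sS (hη s)).differentiableAt
        unfold lamW; fun_prop
      have hz : DifferentiableAt ℂ (fun w => (a / ‖a‖ * zt ε w) ^ (-(y n)))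
          (s + (β / m : ℝ) * Complex.I) :=
        ((differentiableAt_zt ε _).const_mul _).zpow
          (Or.inl (mul_ne_zero (phase_facts hab).2.1 (zt_ne hε _)))
      exact ((hlam.pow n).mul (hz.mul (he s))).continuousAt.comp
        (f := fun s : ℝ => (s + (β / m : ℝ) * Complex.I : ℂ)) (by fun_prop)
    have hi1 := hcont _ fun s => (differentiableAt_eP (b := b) hε φ (hη s)).1
    have hi2 := hcont _ fun s => (differentiableAt_eP (b := b) hε φ (hη s)).2
    rw [walk_repr hab1 hab hε φ (β / m) hη n (y n), innC]
    simp only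
    rw [mul_assoc _ _ ((starRingEnd ℂ) ψ.1), mul_assoc _ _ ((starRingEnd ℂ) ψ.2), ← mul_add,
      ← intervalIntegral.integral_mul_const, ← intervalIntegral.integral_mul_const,
      ← intervalIntegral.integral_add (hi1.mul_const _) (hi2.mul_const _)]
    have hint : ∀ s : ℝ, lamW ‖a‖ (s + (β / m : ℝ) * Complex.I) ^ n *
          ((a / ‖a‖ * zt ε (s + (β / m : ℝ) * Complex.I)) ^ (-(y n))
            * eP1 a b ε φ (s + (β / m : ℝ) * Complex.I)) * (starRingEnd ℂ) ψ.1
        + lamW ‖a‖ (s + (β / m : ℝ) * Complex.I) ^ n *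
          ((a / ‖a‖ * zt ε (s + (β / m : ℝ) * Complex.I)) ^ (-(y n))
            * eP2 a b ε φ (s + (β / m : ℝ) * Complex.I)) * (starRingEnd ℂ) ψ.2
        = c * (G (s + (β / m : ℝ) * Complex.I) *
            Complex.exp (Complex.I * ((m : ℂ) ^ 3 * qS ‖a‖ (s + (β / m : ℝ) * Complex.I)))
            * Complex.exp (Complex.I * ((ε * d n : ℝ) * (s + (β / m : ℝ) * Complex.I)))) := by
      intro s
      have hph := phase_id hε (hη s) (a / ‖a‖) n (y n) (d n) (hy n)
      rw [← hc] at hph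
      simp only [hG, hm3c]
      linear_combination (eP1 a b ε φ (s + (β / m : ℝ) * Complex.I) * (starRingEnd ℂ) ψ.1
        + eP2 a b ε φ (s + (β / m : ℝ) * Complex.I) * (starRingEnd ℂ) ψ.2) * hph
    simp_rw [hint]
    rw [intervalIntegral.integral_const_mul, ← hT]
    ring
  have hG0 : fpsi a b φ ψ ((ε : ℂ) * Complex.I) = G 0 := (amp_zero hab1 hab hε φ ψ).symm
  have harg : ε * β * m⁻¹ * d n = β * m⁻¹ * (ε * d n) := by ring
  rw [hwalk, hG0, hmi, hm2, harg]
  have hfac : c * (1 + (-1 : ℂ) ^ ((n : ℤ) + y n)) * (1 / (2 * Real.pi)) * T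
      - c * (1 + (-1 : ℂ) ^ ((n : ℤ) + y n)) * G 0 * (β : ℂ) * ((m⁻¹ : ℝ) : ℂ)
        * Ai (β * m⁻¹ * (ε * d n))
      = c * (1 + (-1 : ℂ) ^ ((n : ℤ) + y n)) * (1 / (2 * Real.pi)) *
        (T - G 0 * (2 * Real.pi * β * ((m⁻¹ : ℝ) : ℂ) * Ai (β * m⁻¹ * (ε * d n)))) := by
    field_simp
  have hpar : ‖(1 : ℂ) + (-1 : ℂ) ^ ((n : ℤ) + y n)‖ ≤ 2 := by
    refine (norm_add_le _ _).trans ?_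
    rw [norm_zpow, norm_neg, norm_one, one_zpow]; norm_num
  have hpin : ‖(1 / (2 * Real.pi) : ℂ)‖ = 1 / (2 * Real.pi) := by
    have : (1 / (2 * Real.pi) : ℂ) = ((1 / (2 * Real.pi) : ℝ) : ℂ) := by push_cast; rfl
    rw [this, Complex.norm_real, Real.norm_of_nonneg (by positivity)]
  rw [hfac, norm_mul, norm_mul, norm_mul, hcn, one_mul, hpin,
    Real.norm_of_nonneg (by positivity : (0 : ℝ) ≤ 1 / m ^ 2)]
  calc _ ≤ 2 * (1 / (2 * Real.pi)) * (C / m ^ 2) := by gcongr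
    _ = _ := by ring
end
end
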